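/- arXiv:1811.09947 — 8 statements merged into one kernel-verified Lean document; each statement's English description precedes it below -/
import Mathlib

section
/- For every μ > 0 there exists δ > 0 such that for every N ≥ 1 and every subset R ⊆ [−N, N]² of the integer grid with |R| ≥ μ·(2N+1)², the number of quadruples (x₁, y₁, x₂, y₂) ∈ ℤ⁴ with (x₁, y₁) ∈ R, (x₂, y₂) ∈ R and (x₁ + y₁ − y₂, x₂ + y₂ − x₁) ∈ R is at least δ·(2N+1)⁴. -/
/-!
The relation `r = (x₁ + y₁ - y₂, x₂ + y₂ - x₁)` reads `r = A p + B q` with `p = (x₁, y₁)`,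
`q = (x₂, y₂)`, `A (x, y) = (x + y, -x)` and `B (x, y) = (-y, x + y)`. Both maps are injective over
every commutative ring, and `A + B = 1`, so this is a translation-invariant three-variable equation
(the vertices of "equilateral triangles" of `ℤ[ω]`) and the Ruzsa–Szemerédi argument applies.

Concretely, let `G` be a finite abelian group with injective endomorphisms `A`, `B` summing to the
identity and let `S ⊆ G` have density at least `ε`. In the tripartite graph on three copies of `G`
where `u ~ v` iff `u - v ∈ A S`, `v ~ w` iff `v - w ∈ B S` and `u ~ w` iff `u - w ∈ S`, every
triangle yields a solution `(p, q)` of `p, q, A p + B q ∈ S`, and each solution comes from exactly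
`|G|` triangles. The constant solutions `p = q` give `|G||S|` edge-disjoint triangles, so by the
triangle removal lemma there are `≫ |G|³` triangles, hence `≫ |G|²` solutions.

The grid is transferred to `G = (ZMod (4 N + 1))²`: the modulus is large enough that a
solution modulo `4 N + 1` among points of `[-N, N]²` is a solution over `ℤ`.
-/

open SimpleGraph SimpleGraph.TripartiteFromTriangles Finset in
/-- Varnavides-type count: for injective endomorphisms `A`, `B` with `A + B = 1`, a dense set `S`
contains a positive proportion of the pairs `(p, q)` with `p, q, A p + B q ∈ S`. -/
theorem many_solutions {G : Type*} [AddCommGroup G] [Fintype G] [DecidableEq G]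
    (A B : G →+ G) (hA : Function.Injective A) (hB : Function.Injective B)
    (hAB : ∀ g, A g + B g = g) (S : Finset G) (ε : ℝ)
    (hS : ε * (Fintype.card G : ℝ) ≤ S.card) :
    27 * triangleRemovalBound (ε / 9) * (Fintype.card G : ℝ) ^ 2 ≤
      (((S ×ˢ S).filter fun p => A p.1 + B p.2 ∈ S).card : ℝ) := by
  set T := (S ×ˢ S).filter fun p => A p.1 + B p.2 ∈ S with hT
  -- The triangles coming from the constant solutions `p = q = r`.
  let ψ : G × G ↪ G × G × G :=
    ⟨fun p => (p.1, p.1 - A p.2, p.1 - p.2), by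
      rintro ⟨a, b⟩ ⟨c, d⟩ h
      simp only [Prod.mk.injEq] at h
      obtain ⟨rfl, -, h⟩ := h
      simpa using h⟩
  let t : Finset (G × G × G) := ((univ : Finset G) ×ˢ S).map ψ
  have mem_t : ∀ a b c, (a, b, c) ∈ t ↔ ∃ r ∈ S, b = a - A r ∧ c = a - r := by
    intro a b c
    simp only [t, ψ, mem_map, mem_product, mem_univ, true_and, Prod.exists]
    constructor
    · rintro ⟨u, r, hr, h⟩
      obtain ⟨rfl, rfl, rfl⟩ : u = a ∧ u - A r = b ∧ u - r = c := by
        change (u, u - A r, u - r) = _ at h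
        simpa using h
      exact ⟨r, hr, rfl, rfl⟩
    · rintro ⟨r, hr, rfl, rfl⟩
      exact ⟨a, r, hr, rfl⟩
  have hBe : ∀ g, B g = g - A g := fun g => by
    rw [eq_sub_iff_add_eq, add_comm]; exact hAB g
  have hdis : ExplicitDisjoint t := by
    refine ⟨?_, ?_, ?_⟩
    · intro a b c a' h h'
      obtain ⟨r, -, h1, h2⟩ := (mem_t _ _ _).1 h
      obtain ⟨r', -, h1', h2'⟩ := (mem_t _ _ _).1 h'
      have e : B r = b - c := by rw [hBe, h1, h2]; abel
      have e' : B r' = b - c := by rw [hBe, h1', h2']; abel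
      have : r = r' := hB (e.trans e'.symm)
      subst this
      exact sub_left_injective (h2.symm.trans h2')
    · intro a b c b' h h'
      obtain ⟨r, -, h1, h2⟩ := (mem_t _ _ _).1 h
      obtain ⟨r', -, h1', h2'⟩ := (mem_t _ _ _).1 h'
      have : r = r' := sub_right_injective (h2.symm.trans h2')
      rw [h1, h1', this]
    · intro a b c c' h h'
      obtain ⟨r, -, h1, h2⟩ := (mem_t _ _ _).1 h
      obtain ⟨r', -, h1', h2'⟩ := (mem_t _ _ _).1 h'
      have : r = r' := hA (sub_right_injective (h1.symm.trans h1'))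
      rw [h2, h2', this]
  have ht : t.card = Fintype.card G * S.card := by simp [t, card_product]
  have hfar : (graph t).FarFromTriangleFree (ε / 9) := by
    refine farFromTriangleFree t ?_
    rw [ht]
    push_cast
    have h0 : (0 : ℝ) ≤ Fintype.card G := by positivity
    nlinarith [mul_le_mul_of_nonneg_left hS h0]
  have hrem := hfar.le_card_cliqueFinset
  have hsub : (graph t).cliqueFinset 3 ⊆ ((univ : Finset G) ×ˢ T).image
      (fun x => toTriangle (x.1, x.1 - A x.2.1, x.1 - A x.2.1 - B x.2.2)) := by
    intro s hs
    rw [mem_cliqueFinset_iff, SimpleGraph.is3Clique_iff] at hs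
    obtain ⟨x, y, z, hxy, hxz, hyz, rfl⟩ := hs
    obtain ⟨a, b, c, habc, hab, hac, hbc⟩ := graph_triple hxy hxz hyz
    obtain ⟨c', hc'⟩ := Graph.in₀₁_iff.1 hab
    obtain ⟨b', hb'⟩ := Graph.in₀₂_iff.1 hac
    obtain ⟨a', ha'⟩ := Graph.in₁₂_iff.1 hbc
    obtain ⟨p, hp, hp1, -⟩ := (mem_t _ _ _).1 hc'
    obtain ⟨r, hr, -, hr2⟩ := (mem_t _ _ _).1 hb'
    obtain ⟨q, hq, hq1, hq2⟩ := (mem_t _ _ _).1 ha'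
    have hbq : B q = b - c := by rw [hBe, hq1, hq2]; abel
    have hbp : A p = a - b := by rw [hp1]; abel
    refine mem_image.2 ⟨(a, p, q), ?_, ?_⟩
    · have : A p + B q = r := by rw [hbp, hbq, hr2]; abel
      simp [hT, hp, hq, this, hr]
    · rw [← habc]
      simp [toTriangle_apply, hbp, hbq]
  have hle : ((graph t).cliqueFinset 3).card ≤ Fintype.card G * T.card := by
    refine (card_le_card hsub).trans (card_image_le.trans ?_)
    simp [card_product]
  have hle' : (((graph t).cliqueFinset 3).card : ℝ) ≤ Fintype.card G * T.card := by
    exact_mod_cast hle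
  have hpos : (0 : ℝ) < Fintype.card G := by
    exact_mod_cast Fintype.card_pos
  have hcard : (Fintype.card (G ⊕ G ⊕ G) : ℝ) = 3 * Fintype.card G := by
    simp only [Fintype.card_sum]; push_cast; ring
  rw [hcard] at hrem
  refine le_of_mul_le_mul_left ?_ hpos
  calc _ = triangleRemovalBound (ε / 9) * (3 * (Fintype.card G : ℝ)) ^ 3 := by ring
    _ ≤ _ := hrem.trans hle'

/-- Integers at distance at most `4 n` that agree modulo `4 n + 1` are equal. -/
theorem eq_of_cast_eq {n : ℕ} {a b : ℤ} (h : (a : ZMod (4 * n + 1)) = b)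
    (hab : |b - a| ≤ 4 * n) : a = b := by
  have hd := (ZMod.intCast_eq_intCast_iff_dvd_sub a b _).1 h
  have := Int.eq_zero_of_abs_lt_dvd hd (by push_cast; lia)
  lia

theorem stmt5 (μ : ℝ) (hμ : 0 < μ) :
    ∃ δ : ℝ, 0 < δ ∧
      ∀ N : ℤ, 1 ≤ N → ∀ R : Finset (ℤ × ℤ),
        (∀ r ∈ R, r.1 ∈ Finset.Icc (-N) N ∧ r.2 ∈ Finset.Icc (-N) N) →
        μ * (2 * (N : ℝ) + 1) ^ 2 ≤ (R.card : ℝ) →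
        δ * (2 * (N : ℝ) + 1) ^ 4 ≤
          (Nat.card {t : ℤ × ℤ × ℤ × ℤ //
            (t.1, t.2.1) ∈ R ∧ (t.2.2.1, t.2.2.2) ∈ R ∧
            (t.1 + t.2.1 - t.2.2.2, t.2.2.1 + t.2.2.2 - t.1) ∈ R} : ℝ) := by
  have hb : 0 < SimpleGraph.triangleRemovalBound (μ / 4 / 9) :=
    SimpleGraph.triangleRemovalBound_pos (by positivity)
  -- The factor `4` is the bound `(4 N + 1)² ≤ 4 (2 N + 1)²` for the loss of density.
  refine ⟨27 * SimpleGraph.triangleRemovalBound (μ / 4 / 9), by positivity, ?_⟩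
  intro N hN R hR hcard
  lift N to ℕ using by lia with n
  let K := ZMod (4 * n + 1)
  let A : K × K →+ K × K :=
    { toFun := fun p => (p.1 + p.2, -p.1)
      map_zero' := by simp
      map_add' := fun p q => by ext <;> simp <;> ring }
  let B : K × K →+ K × K :=
    { toFun := fun p => (-p.2, p.1 + p.2)
      map_zero' := by simp
      map_add' := fun p q => by ext <;> simp <;> ring }
  have hAv : ∀ p, A p = (p.1 + p.2, -p.1) := fun _ => rfl
  have hBv : ∀ p, B p = (-p.2, p.1 + p.2) := fun _ => rfl
  have hA : Function.Injective A := by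
    rintro ⟨a, b⟩ ⟨c, d⟩ h
    simp only [hAv, Prod.mk.injEq] at h
    obtain ⟨h, h'⟩ := h
    obtain rfl := neg_injective h'
    simpa using h
  have hB : Function.Injective B := by
    rintro ⟨a, b⟩ ⟨c, d⟩ h
    simp only [hBv, Prod.mk.injEq] at h
    obtain ⟨h', h⟩ := h
    obtain rfl := neg_injective h'
    simpa using h
  have hAB : ∀ g, A g + B g = g := by
    rintro ⟨a, b⟩
    exact Prod.ext (by change a + b + -b = a; ring) (by change -a + (a + b) = b; ring)
  let f : ℤ × ℤ → K × K := fun p => ((p.1 : K), (p.2 : K))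
  have hinj : Set.InjOn f R := by
    rintro ⟨a, b⟩ hp ⟨c, d⟩ hq h
    have h1 := hR _ hp
    have h2 := hR _ hq
    simp only [Finset.mem_Icc] at h1 h2
    simp only [f, Prod.mk.injEq] at h
    rw [eq_of_cast_eq h.1 (by rw [abs_le]; lia), eq_of_cast_eq h.2 (by rw [abs_le]; lia)]
  have hS : (R.image f).card = R.card := Finset.card_image_of_injOn hinj
  have hG : (Fintype.card (K × K) : ℝ) = (4 * (n : ℝ) + 1) ^ 2 := by
    simp only [K, Fintype.card_prod, ZMod.card]; push_cast; ring
  have hn : (0 : ℝ) ≤ n := by positivity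
  have key := many_solutions A B hA hB hAB (R.image f) (μ / 4) (by
    rw [hS, hG]
    refine le_trans ?_ hcard
    push_cast
    have : (4 * (n : ℝ) + 1) ^ 2 ≤ 4 * (2 * n + 1) ^ 2 := by nlinarith
    nlinarith)
  rw [hG] at key
  let T : Finset (ℤ × ℤ × ℤ × ℤ) :=
    ((R ×ˢ R).image fun p => (p.1.1, p.1.2, p.2.1, p.2.2)).filter fun t =>
      (t.1 + t.2.1 - t.2.2.2, t.2.2.1 + t.2.2.2 - t.1) ∈ R
  have hT : ∀ t : ℤ × ℤ × ℤ × ℤ, t ∈ T ↔ (t.1, t.2.1) ∈ R ∧ (t.2.2.1, t.2.2.2) ∈ R ∧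
      (t.1 + t.2.1 - t.2.2.2, t.2.2.1 + t.2.2.2 - t.1) ∈ R := by
    rintro ⟨a, b, c, d⟩
    simp only [T, Finset.mem_filter, Finset.mem_image, Finset.mem_product, Prod.mk.injEq,
      Prod.exists]
    constructor
    · rintro ⟨⟨_, _, _, _, ⟨h1, h2⟩, rfl, rfl, rfl, rfl⟩, h3⟩
      exact ⟨h1, h2, h3⟩
    · rintro ⟨h1, h2, h3⟩
      exact ⟨⟨a, b, c, d, ⟨h1, h2⟩, rfl, rfl, rfl, rfl⟩, h3⟩
  rw [Nat.subtype_card T hT]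
  have hsub : ((R.image f ×ˢ R.image f).filter fun p => A p.1 + B p.2 ∈ R.image f) ⊆
      T.image fun t => (f (t.1, t.2.1), f (t.2.2.1, t.2.2.2)) := by
    rintro ⟨p, q⟩ h
    simp only [Finset.mem_filter, Finset.mem_product] at h
    obtain ⟨⟨hp, hq⟩, hr⟩ := h
    obtain ⟨⟨a, b⟩, hab, rfl⟩ := Finset.mem_image.1 hp
    obtain ⟨⟨c, d⟩, hcd, rfl⟩ := Finset.mem_image.1 hq
    obtain ⟨⟨x, y⟩, hxy, hr⟩ := Finset.mem_image.1 hr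
    refine Finset.mem_image.2 ⟨(a, b, c, d), (hT _).2 ⟨hab, hcd, ?_⟩, rfl⟩
    have h1 := hR _ hab
    have h2 := hR _ hcd
    have h3 := hR _ hxy
    simp only [Finset.mem_Icc] at h1 h2 h3
    simp only [hAv, hBv, f, Prod.mk_add_mk, Prod.mk.injEq] at hr
    have e1 : x = a + b - d := eq_of_cast_eq (n := n)
      (by rw [hr.1]; push_cast; ring) (by rw [abs_le]; lia)
    have e2 : y = c + d - a := eq_of_cast_eq (n := n)
      (by rw [hr.2]; push_cast; ring) (by rw [abs_le]; lia)
    simpa [← e1, ← e2] using hxy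
  have hle : ((((R.image f ×ˢ R.image f).filter
      fun p => A p.1 + B p.2 ∈ R.image f).card : ℕ) : ℝ) ≤ T.card := by
    exact_mod_cast (Finset.card_le_card hsub).trans Finset.card_image_le
  refine le_trans ?_ (key.trans hle)
  rw [← pow_mul]
  push_cast
  gcongr
  norm_num
end

section
/- For every C₁ > 0 there exist C₂ > 0 and n₀ such that for all n ≥ n₀ divisible by 6 the following holds with N := ⌊C₁·√n⌋. For every tuple w = (x₀, x₁, y₀, y₁, z₀, z₁) ∈ ℤ⁶ with all entries in [−N, N], let F(w) denote the number of pairs (x,d) with x ∈ (ZMod 3)ⁿ, d ∈ {0,1}ⁿ such that (w_0(x) − n/3, w_1(x) − n/3) = (x₀, x₁), (w_0(x+d) − n/3, w_1(x+d) − n/3) = (y₀, y₁) and (w_0(x+2d) − n/3, w_1(x+2d) − n/3) = (z₀, z₁). Then: if (z₀, z₁) ≠ (x₀ + x₁ − y₁, y₀ + y₁ − x₀) then F(w) = 0, and if (z₀, z₁) = (x₀ + x₁ − y₁, y₀ + y₁ − x₀) then F(w) ≥ C₂·6ⁿ/N⁴. -/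
/-!
Sort the coordinates of a pair `(x, d)` into six classes by the value of `(x i, d i)`. The
weights of `x`, `x + d`, `x + 2d` are sums of two class sizes each. Checked coordinatewise, they
satisfy two linear relations, which gives the vanishing statement (`F3_eq_zero`).

Write `n = 6m`. When the relations hold, the remaining four equations together with the total
size `n` leave a one-parameter family of class sizes (`dev`), parametrized by the deviation `s` of
one class from `m`. For each integer `0 ≤ s ≤ √m` all six sizes differ from `m` by `O(√m)`. The
number of pairs with such class sizes is a multinomial coefficient
(`factorial_le_card_colourings`), and by Stirling's formula it is at least a constant times
`6 ^ n / m ^ (5 / 2)` (`prod_factorial_le`): the deviations sum to zero, so only their squares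
divided by `m`, which are bounded, enter the exponent. Different `s` give disjoint sets of pairs
(`card_mul_le_F3`), and the `√m` values of `s` contribute a constant times `6 ^ n / m ^ 2` in
total (`F3_lower`), while `N` is of order `√m`.
-/

/-- The weight of `a` in `x`: the number of coordinates `i` with `x i = a`. -/
def wt {q n : ℕ} (x : Fin n → ZMod q) (a : ZMod q) : ℕ :=
  (Finset.univ.filter fun i => x i = a).card

/-- The number of pairs `(x, d)` with `x ∈ (ZMod 3)ⁿ`, `d ∈ {0,1}ⁿ` such that the
centered weight tuples of `x`, `x+d`, `x+2d` are `(x₀,x₁)`, `(y₀,y₁)`, `(z₀,z₁)`. -/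
noncomputable def F3 (n : ℕ) (x₀ x₁ y₀ y₁ z₀ z₁ : ℤ) : ℕ :=
  Nat.card {xd : (Fin n → ZMod 3) × (Fin n → ZMod 3) //
    (∀ i, xd.2 i = 0 ∨ xd.2 i = 1) ∧
    (wt xd.1 0 : ℤ) - (n / 3 : ℕ) = x₀ ∧
    (wt xd.1 1 : ℤ) - (n / 3 : ℕ) = x₁ ∧
    (wt (fun i => xd.1 i + xd.2 i) 0 : ℤ) - (n / 3 : ℕ) = y₀ ∧
    (wt (fun i => xd.1 i + xd.2 i) 1 : ℤ) - (n / 3 : ℕ) = y₁ ∧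
    (wt (fun i => xd.1 i + 2 * xd.2 i) 0 : ℤ) - (n / 3 : ℕ) = z₀ ∧
    (wt (fun i => xd.1 i + 2 * xd.2 i) 1 : ℤ) - (n / 3 : ℕ) = z₁}
/-! ### Stirling bounds -/

/-- The upper half of Stirling's formula with explicit constant. -/
lemma factorial_le_stirling (k : ℕ) (hk : 1 ≤ k) :
    (k.factorial : ℝ) ≤ Real.exp 1 * √k * (k / Real.exp 1) ^ k := by
  obtain ⟨j, rfl⟩ : ∃ j, k = j + 1 := ⟨k - 1, by omega⟩
  have h := Stirling.stirlingSeq'_antitone (Nat.zero_le j)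
  simp only [Function.comp, Nat.succ_eq_add_one, zero_add, Stirling.stirlingSeq_one] at h
  rw [Stirling.stirlingSeq, div_le_iff₀ (by positivity), Real.sqrt_mul (by norm_num)] at h
  refine h.trans (le_of_eq ?_)
  have : √(2 : ℝ) ≠ 0 := by positivity
  field_simp

/-- Stirling's upper bound for `k!` with `k` within `A√m` of `m`: apart from the factor
`exp (k - m)`, which disappears in products over deviations summing to zero, the bound depends
on `k` only through the exponent of `m / e`. -/
lemma factorial_le_near (A : ℝ) (m k : ℕ) (hm : 1 ≤ m)
    (hk : |(k : ℝ) - m| ≤ A * √m) (hA : A * √m ≤ m / 2) :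
    (k.factorial : ℝ) ≤ Real.exp 1 * √(2 * m) * (m / Real.exp 1) ^ k *
      Real.exp (k - m + A ^ 2) := by
  have hm0 : (1 : ℝ) ≤ m := by exact_mod_cast hm
  obtain ⟨h1, h2⟩ := abs_le.1 hk
  have hk0 : (0 : ℝ) < k := by linarith
  have hk1 : 1 ≤ k := by exact_mod_cast hk0
  refine (factorial_le_stirling k hk1).trans ?_
  have hs : ((k : ℝ) - m) ^ 2 ≤ A ^ 2 * m := by
    have := sq_le_sq' h1 h2
    rwa [mul_pow, Real.sq_sqrt (by positivity)] at this
  -- `k log (k / m) ≤ k (k / m - 1) = (k - m) + (k - m)² / m`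
  have hlog : k * Real.log (k / m) ≤ k - m + A ^ 2 := by
    have hl := Real.log_le_sub_one_of_pos (x := (k : ℝ) / m) (by positivity)
    have e : (k : ℝ) * (k / m - 1) = k - m + (k - m) ^ 2 / m := by field_simp; ring
    have : ((k : ℝ) - m) ^ 2 / m ≤ A ^ 2 := by rwa [div_le_iff₀ (by positivity)]
    nlinarith
  have hpow : (k / Real.exp 1 : ℝ) ^ k ≤ (m / Real.exp 1) ^ k * Real.exp (k - m + A ^ 2) := by
    have e : (k / Real.exp 1 : ℝ) ^ k
        = (m / Real.exp 1) ^ k * Real.exp (k * Real.log (k / m)) := by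
      rw [Real.exp_nat_mul, Real.exp_log (by positivity), ← mul_pow]
      congr 1
      field_simp
    rw [e]
    gcongr
  rw [mul_assoc _ (_ ^ k)]
  gcongr
  linarith

/-- A multinomial coefficient with six parts, each within `A√m` of the mean `m`, is at least a
constant times `6^(6m) / m^(5/2)`. -/
lemma prod_factorial_le {α : Type*} [Fintype α] (hα : Fintype.card α = 6)
    (A : ℝ) (m : ℕ) (k : α → ℕ) (hm : 1 ≤ m) (hsum : ∑ a, k a = 6 * m)
    (hk : ∀ a, |(k a : ℝ) - m| ≤ A * √m) (hA : A * √m ≤ m / 2) :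
    (6 : ℝ) ^ (6 * m) * √m * (∏ a, (k a).factorial : ℕ) ≤
      8 * Real.exp (6 + 6 * A ^ 2) * m ^ 3 * (6 * m).factorial := by
  have hsumR : ∑ a, (k a : ℝ) = 6 * m := by exact_mod_cast hsum
  have hm0 : (1 : ℝ) ≤ m := by exact_mod_cast hm
  have hprod : ((∏ a, (k a).factorial : ℕ) : ℝ) ≤
      Real.exp 1 ^ 6 * (8 * m ^ 3) * (m / Real.exp 1) ^ (6 * m) * Real.exp (6 * A ^ 2) := by
    push_cast
    refine (Finset.prod_le_prod (fun _ _ => by positivity)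
      (fun a _ => factorial_le_near A m (k a) hm (hk a) hA)).trans (le_of_eq ?_)
    rw [Finset.prod_mul_distrib, Finset.prod_mul_distrib, Finset.prod_pow_eq_pow_sum, hsum,
      ← Real.exp_sum, Finset.prod_const, Finset.sum_add_distrib, Finset.sum_sub_distrib, hsumR]
    simp only [Finset.card_univ, hα, Finset.sum_const, nsmul_eq_mul]
    have e : √(2 * (m : ℝ)) ^ 6 = 8 * m ^ 3 := by
      rw [show √(2 * (m : ℝ)) ^ 6 = (√(2 * (m : ℝ)) ^ 2) ^ 3 by ring,
        Real.sq_sqrt (by positivity)]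
      ring
    rw [mul_pow, e]
    norm_num
  have hst : √m * (6 * m / Real.exp 1 : ℝ) ^ (6 * m) ≤ (6 * m).factorial := by
    have := Stirling.le_factorial_stirling (6 * m)
    push_cast at this
    refine le_trans ?_ this
    gcongr
    nlinarith [Real.pi_gt_three]
  calc (6 : ℝ) ^ (6 * m) * √m * (∏ a, (k a).factorial : ℕ)
      ≤ (6 : ℝ) ^ (6 * m) * √m * (Real.exp 1 ^ 6 * (8 * m ^ 3) * (m / Real.exp 1) ^ (6 * m)
          * Real.exp (6 * A ^ 2)) := by gcongr
    _ = 8 * Real.exp (6 + 6 * A ^ 2) * m ^ 3 * (√m * (6 * m / Real.exp 1 : ℝ) ^ (6 * m)) := by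
        rw [Real.exp_add, ← Real.exp_nat_mul, mul_div_assoc, mul_pow]
        push_cast
        rw [mul_one]
        ring
    _ ≤ _ := by gcongr

/-! ### Counting colourings with prescribed class sizes -/

/-- The number of colourings of `Fin n` with prescribed colour class sizes `k` is at least the
multinomial coefficient: permuting one such colouring produces each colouring at most `∏ (k a)!`
times. -/
lemma factorial_le_card_colourings {α : Type*} [Fintype α] [DecidableEq α] (n : ℕ) (k : α → ℕ)
    (hsum : ∑ a, k a = n) :
    n.factorial ≤ (∏ a, (k a).factorial) *
      (Finset.univ.filter fun f : Fin n → α =>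
        ∀ a, (Finset.univ.filter fun i => f i = a).card = k a).card := by
  obtain ⟨f₀, hf₀⟩ : ∃ f : Fin n → α,
      ∀ a, (Finset.univ.filter fun i => f i = a).card = k a := by
    have e : Fin n ≃ (Σ a, Fin (k a)) := Fintype.equivOfCardEq (by simp [hsum])
    refine ⟨fun i => (e i).1, fun a => ?_⟩
    rw [← Fintype.card_subtype]
    have e2 : {i // (e i).1 = a} ≃ Fin (k a) :=
      (e.subtypeEquiv (q := fun s => s.1 = a) fun _ => Iff.rfl).trans
        (Equiv.sigmaSubtype (β := fun a => Fin (k a)) a)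
    simpa using Fintype.card_congr e2
  have hstab := DomMulAct.stabilizer_card f₀
  simp only [Fintype.card_subtype, hf₀] at hstab
  rw [← hstab]
  have hperm : (Finset.univ : Finset (Equiv.Perm (Fin n))).card = n.factorial := by
    simp [Fintype.card_perm]
  rw [← hperm]
  refine Finset.card_le_mul_card_image_of_maps_to (f := fun σ : Equiv.Perm (Fin n) => f₀ ∘ σ)
    ?_ _ ?_
  · intro σ _
    refine Finset.mem_filter.2 ⟨Finset.mem_univ _, fun a => ?_⟩
    rw [← hf₀ a]
    exact Finset.card_equiv σ (by simp)
  · intro g _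
    rcases (Finset.univ.filter fun σ : Equiv.Perm (Fin n) => f₀ ∘ σ = g).eq_empty_or_nonempty
      with h | ⟨τ, hτ⟩
    · simp [h]
    · refine Finset.card_le_card_of_injOn (fun σ => σ * τ⁻¹) ?_ ?_
      · intro σ hσ
        simp only [Finset.coe_filter, Finset.mem_filter, Finset.mem_univ, true_and,
          Set.mem_ofPred_eq] at hσ hτ ⊢
        funext i
        have := congrFun (hσ.trans hτ.symm) (τ⁻¹ i)
        simpa using this
      · intro σ _ σ' _ h
        simpa using h

/-- The count of indices satisfying a property of their colour, as a sum over colour classes. -/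
lemma card_filter_colour {n : ℕ} (f : Fin n → ZMod 3 × Bool) (P : ZMod 3 × Bool → Prop)
    [DecidablePred P] :
    (Finset.univ.filter fun i => P (f i)).card =
      ∑ c, if P c then (Finset.univ.filter fun i => f i = c).card else 0 := by
  rw [Finset.card_eq_sum_card_fiberwise (f := f) (t := Finset.univ) (by simp)]
  refine Finset.sum_congr rfl fun c _ => ?_
  rw [Finset.filter_filter]
  split_ifs with h
  · congr 1
    ext i
    simp only [Finset.mem_filter, Finset.mem_univ, true_and]
    constructor
    · exact fun h' => h'.2
    · rintro rfl
      exact ⟨h, rfl⟩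
  · rw [Finset.card_eq_zero, Finset.filter_eq_empty_iff]
    rintro i _ ⟨h1, rfl⟩
    exact h h1

/-! ### Pairs as six-colourings -/

/-- The pair `(x, d)` encoded by a colouring: the colour of `i` is `(x i, d i)`, with `true`
standing for `d i = 1`. -/
def decode {n : ℕ} (f : Fin n → ZMod 3 × Bool) : (Fin n → ZMod 3) × (Fin n → ZMod 3) :=
  (fun i => (f i).1, fun i => if (f i).2 then 1 else 0)

lemma decode_injective {n : ℕ} : Function.Injective (decode (n := n)) := by
  intro f g h
  funext i
  have h1 : (f i).1 = (g i).1 := congrFun (congrArg Prod.fst h) i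
  have h2 : (if (f i).2 then 1 else 0 : ZMod 3) = if (g i).2 then 1 else 0 :=
    congrFun (congrArg Prod.snd h) i
  have key : ∀ a b : Bool, (if a then 1 else 0 : ZMod 3) = (if b then 1 else 0) → a = b := by
    decide
  exact Prod.ext h1 (key _ _ h2)

/-- The deviations of the six class sizes from `n / 6`, parametrized by the deviation `s` of the
class `(0, 0)`: the general integral solution of the linear system expressing the weights of `x`
and `x + d` through the class sizes. -/
def dev (x₀ x₁ y₀ y₁ s : ℤ) (c : ZMod 3 × Bool) : ℤ :=
  if c.1 = 0 then (if c.2 then x₀ - s else s)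
  else if c.1 = 1 then (if c.2 then x₁ - y₁ + x₀ - s else y₁ - x₀ + s)
  else (if c.2 then y₀ - s else s - x₀ - x₁ - y₀)

lemma sum_colours {M : Type*} [AddCommMonoid M] (g : ZMod 3 × Bool → M) :
    ∑ c, g c = (g (0, true) + g (0, false)) + (g (1, true) + g (1, false)) +
      (g (2, true) + g (2, false)) := by
  rw [Fintype.sum_prod_type]
  simp only [Fintype.sum_bool]
  exact Fin.sum_univ_three (fun a : ZMod 3 => g (a, true) + g (a, false))

lemma dev_values (x₀ x₁ y₀ y₁ s : ℤ) :
    dev x₀ x₁ y₀ y₁ s (0, false) = s ∧ dev x₀ x₁ y₀ y₁ s (0, true) = x₀ - s ∧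
    dev x₀ x₁ y₀ y₁ s (1, false) = y₁ - x₀ + s ∧
    dev x₀ x₁ y₀ y₁ s (1, true) = x₁ - y₁ + x₀ - s ∧
    dev x₀ x₁ y₀ y₁ s (2, false) = s - x₀ - x₁ - y₀ ∧
    dev x₀ x₁ y₀ y₁ s (2, true) = y₀ - s := by
  have h10 : ¬ (1 : ZMod 3) = 0 := by decide
  have h20 : ¬ (2 : ZMod 3) = 0 := by decide
  have h21 : ¬ (2 : ZMod 3) = 1 := by decide
  refine ⟨?_, ?_, ?_, ?_, ?_, ?_⟩ <;> simp [dev, h10, h20, h21]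

/-- A colouring whose class sizes deviate from `m` by `dev` encodes a pair with the prescribed
weights. -/
lemma decode_spec {m : ℕ} (x₀ x₁ y₀ y₁ s : ℤ) (f : Fin (6 * m) → ZMod 3 × Bool)
    (hf : ∀ c, ((Finset.univ.filter fun i => f i = c).card : ℤ) = m + dev x₀ x₁ y₀ y₁ s c) :
    (∀ i, (decode f).2 i = 0 ∨ (decode f).2 i = 1) ∧
    (wt (decode f).1 0 : ℤ) - (6 * m / 3 : ℕ) = x₀ ∧
    (wt (decode f).1 1 : ℤ) - (6 * m / 3 : ℕ) = x₁ ∧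
    (wt (fun i => (decode f).1 i + (decode f).2 i) 0 : ℤ) - (6 * m / 3 : ℕ) = y₀ ∧
    (wt (fun i => (decode f).1 i + (decode f).2 i) 1 : ℤ) - (6 * m / 3 : ℕ) = y₁ ∧
    (wt (fun i => (decode f).1 i + 2 * (decode f).2 i) 0 : ℤ) - (6 * m / 3 : ℕ)
      = x₀ + x₁ - y₁ ∧
    (wt (fun i => (decode f).1 i + 2 * (decode f).2 i) 1 : ℤ) - (6 * m / 3 : ℕ)
      = y₀ + y₁ - x₀ := by
  have hdiv : 6 * m / 3 = 2 * m := by omega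
  obtain ⟨d1, d2, d3, d4, d5, d6⟩ := dev_values x₀ x₁ y₀ y₁ s
  have c1 := hf (0, false)
  have c2 := hf (0, true)
  have c3 := hf (1, false)
  have c4 := hf (1, true)
  have c5 := hf (2, false)
  have c6 := hf (2, true)
  rw [d1] at c1
  rw [d2] at c2
  rw [d3] at c3
  rw [d4] at c4
  rw [d5] at c5
  rw [d6] at c6
  have h10 : ¬ (1 : ZMod 3) = 0 := by decide
  have h20 : ¬ (2 : ZMod 3) = 0 := by decide
  have h21 : ¬ (2 : ZMod 3) = 1 := by decide
  have h01 : ¬ (0 : ZMod 3) = 1 := by decide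
  have a11 : (1 + 1 : ZMod 3) = 2 := by decide
  have a21 : (2 + 1 : ZMod 3) = 0 := by decide
  have a12 : (1 + 2 : ZMod 3) = 0 := by decide
  have a22 : (2 + 2 : ZMod 3) = 1 := by decide
  rw [hdiv]
  refine ⟨fun i => ?_, ?_, ?_, ?_, ?_, ?_, ?_⟩
  · simp only [decode]
    split_ifs <;> simp
  · have h : wt (decode f).1 0 = _ :=
      card_filter_colour f (fun c => c.1 = 0)
    rw [sum_colours] at h
    simp [h10, h20] at h
    omega
  · have h : wt (decode f).1 1 = _ :=
      card_filter_colour f (fun c => c.1 = 1)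
    rw [sum_colours] at h
    simp [h21] at h
    omega
  · have h : wt (fun i => (decode f).1 i + (decode f).2 i) 0 = _ :=
      card_filter_colour f (fun c => c.1 + (if c.2 then 1 else 0) = 0)
    rw [sum_colours] at h
    simp [h10, h20, a11, a21] at h
    omega
  · have h : wt (fun i => (decode f).1 i + (decode f).2 i) 1 = _ :=
      card_filter_colour f (fun c => c.1 + (if c.2 then 1 else 0) = 1)
    rw [sum_colours] at h
    simp [h21, h01, a11, a21] at h
    omega
  · have h : wt (fun i => (decode f).1 i + 2 * (decode f).2 i) 0 = _ :=
      card_filter_colour f (fun c => c.1 + 2 * (if c.2 then 1 else 0) = 0)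
    rw [sum_colours] at h
    simp [h10, h20, a12, a22] at h
    omega
  · have h : wt (fun i => (decode f).1 i + 2 * (decode f).2 i) 1 = _ :=
      card_filter_colour f (fun c => c.1 + 2 * (if c.2 then 1 else 0) = 1)
    rw [sum_colours] at h
    simp [h01, h21, a12, a22] at h
    omega

/-- Colourings with different values of `s` are different, so lower bounds for the individual
values of `s` add up. -/
lemma card_mul_le_F3 {m : ℕ} (x₀ x₁ y₀ y₁ : ℤ) (S : Finset ℕ) (B : ℝ)
    (hB : ∀ s ∈ S, B ≤ (Finset.univ.filter fun f : Fin (6 * m) → ZMod 3 × Bool =>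
      ∀ c, ((Finset.univ.filter fun i => f i = c).card : ℤ) = m + dev x₀ x₁ y₀ y₁ s c).card) :
    S.card * B ≤ F3 (6 * m) x₀ x₁ y₀ y₁ (x₀ + x₁ - y₁) (y₀ + y₁ - x₀) := by
  classical
  set T : ℕ → Finset (Fin (6 * m) → ZMod 3 × Bool) := fun s => Finset.univ.filter fun f =>
      ∀ c, ((Finset.univ.filter fun i => f i = c).card : ℤ) = m + dev x₀ x₁ y₀ y₁ s c with hT
  have hdisj : (S : Set ℕ).PairwiseDisjoint T := by
    intro s _ s' _ hne
    refine Finset.disjoint_left.2 fun f h h' => hne ?_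
    have e1 := (Finset.mem_filter.1 h).2 (0, false)
    have e2 := (Finset.mem_filter.1 h').2 (0, false)
    rw [(dev_values _ _ _ _ _).1] at e1 e2
    omega
  have hle : (S.biUnion T).card ≤ F3 (6 * m) x₀ x₁ y₀ y₁ (x₀ + x₁ - y₁) (y₀ + y₁ - x₀) := by
    rw [F3, ← Nat.card_eq_finsetCard]
    refine Nat.card_le_card_of_injective (fun f => ⟨decode f.1, ?_⟩) ?_
    · obtain ⟨s, _, hs⟩ := Finset.mem_biUnion.1 f.2
      exact decode_spec x₀ x₁ y₀ y₁ s f.1 (Finset.mem_filter.1 hs).2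
    · intro f g h
      exact Subtype.ext (decode_injective (congrArg Subtype.val h))
  rw [Finset.card_biUnion hdisj] at hle
  calc S.card * B = ∑ _s ∈ S, B := by simp
    _ ≤ ∑ s ∈ S, ((T s).card : ℝ) := Finset.sum_le_sum hB
    _ ≤ _ := by exact_mod_cast hle

/-! ### The bounds for `F3` -/

/-- Every deviation is `O(√m)` when the prescribed weights and `s` are. -/
lemma abs_dev_le (x₀ x₁ y₀ y₁ s N R : ℤ) (hx₀ : |x₀| ≤ N) (hx₁ : |x₁| ≤ N) (hy₀ : |y₀| ≤ N)
    (hy₁ : |y₁| ≤ N) (hs : |s| ≤ R) (c : ZMod 3 × Bool) :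
    |dev x₀ x₁ y₀ y₁ s c| ≤ 3 * N + R := by
  rw [abs_le] at *
  unfold dev
  split_ifs <;> constructor <;> omega

/-- For admissible weights the number of pairs is at least a constant times `6 ^ n / m ^ 2`:
there are at least `√m` choices of `s`, each contributing a constant times
`6 ^ n / m ^ (5 / 2)`. -/
lemma F3_lower (C₁ : ℝ) (m : ℕ) (hm : 1 ≤ m)
    (hA : (9 * C₁ + 1) * √m ≤ m / 2) (x₀ x₁ y₀ y₁ N : ℤ)
    (hN : (N : ℝ) ≤ 3 * C₁ * √m)
    (hx₀ : |x₀| ≤ N) (hx₁ : |x₁| ≤ N) (hy₀ : |y₀| ≤ N) (hy₁ : |y₁| ≤ N) :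
    (6 : ℝ) ^ (6 * m) ≤ 8 * Real.exp (6 + 6 * (9 * C₁ + 1) ^ 2) * m ^ 2 *
      F3 (6 * m) x₀ x₁ y₀ y₁ (x₀ + x₁ - y₁) (y₀ + y₁ - x₀) := by
  set K : ℝ := 8 * Real.exp (6 + 6 * (9 * C₁ + 1) ^ 2) with hK
  have hK0 : 0 < K := by positivity
  have hm0 : (1 : ℝ) ≤ m := by exact_mod_cast hm
  have hmain := card_mul_le_F3 (m := m) x₀ x₁ y₀ y₁ (Finset.range (Nat.sqrt m + 1))
    ((6 : ℝ) ^ (6 * m) * √m / (K * m ^ 3)) (by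
      intro s hs
      have hsR : |(s : ℤ)| ≤ (Nat.sqrt m : ℤ) := by
        have := Finset.mem_range.1 hs
        rw [abs_le]
        omega
      have hdev : ∀ c, |(dev x₀ x₁ y₀ y₁ s c : ℝ)| ≤ (9 * C₁ + 1) * √m := by
        intro c
        have h1 := abs_dev_le x₀ x₁ y₀ y₁ s N _ hx₀ hx₁ hy₀ hy₁ hsR c
        have h2 : |(dev x₀ x₁ y₀ y₁ s c : ℝ)| ≤ 3 * N + (Nat.sqrt m : ℝ) := by
          exact_mod_cast h1
        have h3 : (Nat.sqrt m : ℝ) ≤ √m := Real.nat_sqrt_le_real_sqrt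
        linarith
      have hnonneg : ∀ c, 0 ≤ (m : ℤ) + dev x₀ x₁ y₀ y₁ s c := by
        intro c
        have := (abs_le.1 (hdev c)).1
        have h : (0 : ℝ) ≤ m + (dev x₀ x₁ y₀ y₁ s c : ℝ) := by linarith
        exact_mod_cast h
      set k : ZMod 3 × Bool → ℕ := fun c => ((m : ℤ) + dev x₀ x₁ y₀ y₁ s c).toNat with hk
      have hkz : ∀ c, (k c : ℤ) = m + dev x₀ x₁ y₀ y₁ s c := fun c =>
        Int.toNat_of_nonneg (hnonneg c)
      have hksum : ∑ c, k c = 6 * m := by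
        have : ∑ c, (k c : ℤ) = 6 * m := by
          rw [sum_colours]
          simp only [hkz]
          obtain ⟨d1, d2, d3, d4, d5, d6⟩ := dev_values x₀ x₁ y₀ y₁ s
          rw [d1, d2, d3, d4, d5, d6]
          ring
        exact_mod_cast this
      have hkdev : ∀ c, |(k c : ℝ) - m| ≤ (9 * C₁ + 1) * √m := by
        intro c
        have e : (k c : ℝ) = m + (dev x₀ x₁ y₀ y₁ s c : ℝ) := by exact_mod_cast hkz c
        rw [e, add_sub_cancel_left]
        exact hdev c
      have h1 := prod_factorial_le (by simp [ZMod.card]) _ m k hm hksum hkdev hA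
      have h2 := factorial_le_card_colourings (6 * m) k hksum
      have hset : (Finset.univ.filter fun f : Fin (6 * m) → ZMod 3 × Bool =>
          ∀ c, ((Finset.univ.filter fun i => f i = c).card : ℤ) = m + dev x₀ x₁ y₀ y₁ s c)
          = (Finset.univ.filter fun f : Fin (6 * m) → ZMod 3 × Bool =>
          ∀ c, (Finset.univ.filter fun i => f i = c).card = k c) := by
        ext f
        simp only [Finset.mem_filter, Finset.mem_univ, true_and, ← hkz, Nat.cast_inj]
      rw [hset, div_le_iff₀ (by positivity)]
      have hP : (0 : ℝ) < (∏ c, (k c).factorial : ℕ) := by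
        exact_mod_cast Finset.prod_pos fun c _ => Nat.factorial_pos _
      have h2' : ((6 * m).factorial : ℝ) ≤ (∏ c, (k c).factorial : ℕ) *
          ((Finset.univ.filter fun f : Fin (6 * m) → ZMod 3 × Bool =>
            ∀ c, (Finset.univ.filter fun i => f i = c).card = k c).card : ℝ) := by
        exact_mod_cast h2
      refine le_of_mul_le_mul_right ?_ hP
      refine h1.trans ?_
      rw [← hK]
      refine (mul_le_mul_of_nonneg_left h2' (by positivity)).trans (le_of_eq ?_)
      ring)
  have hcard : √(m : ℝ) ≤ ((Finset.range (Nat.sqrt m + 1)).card : ℝ) := by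
    rw [Finset.card_range]
    push_cast
    exact Real.real_sqrt_le_nat_sqrt_succ
  have hB0 : (0 : ℝ) ≤ (6 : ℝ) ^ (6 * m) * √m / (K * m ^ 3) := by positivity
  have h := (mul_le_mul_of_nonneg_right hcard hB0).trans hmain
  have e : √(m : ℝ) * ((6 : ℝ) ^ (6 * m) * √m / (K * m ^ 3)) = 6 ^ (6 * m) / (K * m ^ 2) := by
    have := Real.mul_self_sqrt (show (0 : ℝ) ≤ m by positivity)
    rw [show √(m : ℝ) * ((6 : ℝ) ^ (6 * m) * √m / (K * m ^ 3))
      = (√(m : ℝ) * √m) * 6 ^ (6 * m) / (K * m ^ 3) by ring, this]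
    field_simp
  rw [e, div_le_iff₀ (by positivity)] at h
  linarith

/-- The weights along a restricted progression satisfy two linear relations, because they hold in
every coordinate. -/
lemma F3_eq_zero (n : ℕ) (x₀ x₁ y₀ y₁ z₀ z₁ : ℤ)
    (h : (z₀, z₁) ≠ (x₀ + x₁ - y₁, y₀ + y₁ - x₀)) : F3 n x₀ x₁ y₀ y₁ z₀ z₁ = 0 := by
  rw [F3, Nat.card_eq_zero]
  refine Or.inl ⟨?_⟩
  rintro ⟨⟨x, d⟩, hd, hx₀, hx₁, hy₀, hy₁, hz₀, hz₁⟩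
  simp only at hd hx₀ hx₁ hy₀ hy₁ hz₀ hz₁
  have k0 : ∀ a b : ZMod 3, (b = 0 ∨ b = 1) →
      ((if a + 2 * b = 0 then 1 else 0) + (if a + b = 1 then 1 else 0) : ℕ) =
      (if a = 0 then 1 else 0) + (if a = 1 then 1 else 0) := by decide
  have k1 : ∀ a b : ZMod 3, (b = 0 ∨ b = 1) →
      ((if a + 2 * b = 1 then 1 else 0) + (if a = 0 then 1 else 0) : ℕ) =
      (if a + b = 0 then 1 else 0) + (if a + b = 1 then 1 else 0) := by decide
  have e0 : wt (fun i => x i + 2 * d i) 0 + wt (fun i => x i + d i) 1 = wt x 0 + wt x 1 := by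
    simp only [wt, Finset.card_filter, ← Finset.sum_add_distrib]
    exact Finset.sum_congr rfl fun i _ => k0 (x i) (d i) (hd i)
  have e1 : wt (fun i => x i + 2 * d i) 1 + wt x 0 =
      wt (fun i => x i + d i) 0 + wt (fun i => x i + d i) 1 := by
    simp only [wt, Finset.card_filter, ← Finset.sum_add_distrib]
    exact Finset.sum_congr rfl fun i _ => k1 (x i) (d i) (hd i)
  apply h
  rw [Prod.mk.injEq]
  constructor <;> omega

theorem stmt7 (C₁ : ℝ) (hC₁ : 0 < C₁) :
    ∃ (C₂ : ℝ) (n₀ : ℕ), 0 < C₂ ∧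
      ∀ n : ℕ, n₀ ≤ n → 6 ∣ n →
        ∀ x₀ x₁ y₀ y₁ z₀ z₁ : ℤ,
          |x₀| ≤ ⌊C₁ * Real.sqrt n⌋ → |x₁| ≤ ⌊C₁ * Real.sqrt n⌋ →
          |y₀| ≤ ⌊C₁ * Real.sqrt n⌋ → |y₁| ≤ ⌊C₁ * Real.sqrt n⌋ →
          |z₀| ≤ ⌊C₁ * Real.sqrt n⌋ → |z₁| ≤ ⌊C₁ * Real.sqrt n⌋ →
          (((z₀, z₁) ≠ (x₀ + x₁ - y₁, y₀ + y₁ - x₀) →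
              F3 n x₀ x₁ y₀ y₁ z₀ z₁ = 0) ∧
           ((z₀, z₁) = (x₀ + x₁ - y₁, y₀ + y₁ - x₀) →
              C₂ * (6 : ℝ) ^ n / ((⌊C₁ * Real.sqrt n⌋ : ℤ) : ℝ) ^ 4 ≤
                (F3 n x₀ x₁ y₀ y₁ z₀ z₁ : ℝ))) := by
  set A : ℝ := 9 * C₁ + 1 with hA
  have hA0 : 0 < A := by positivity
  set K : ℝ := 8 * Real.exp (6 + 6 * A ^ 2) with hK
  have hK0 : 0 < K := by positivity
  -- `n₀` ensures `A √m ≤ m / 2` and `1 ≤ C₁ √m` for `m = n / 6`.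
  refine ⟨C₁ ^ 4 / K, 6 * (⌈4 * A ^ 2 + 1 / C₁ ^ 2⌉₊ + 1), by positivity, ?_⟩
  rintro n hn ⟨m, rfl⟩ x₀ x₁ y₀ y₁ z₀ z₁ hx₀ hx₁ hy₀ hy₁ - -
  refine ⟨F3_eq_zero _ _ _ _ _ _ _, fun hz => ?_⟩
  rw [Prod.mk.injEq] at hz
  obtain ⟨rfl, rfl⟩ := hz
  have hm : ⌈4 * A ^ 2 + 1 / C₁ ^ 2⌉₊ + 1 ≤ m := by omega
  have hm1 : 1 ≤ m := by omega
  have hm0 : (1 : ℝ) ≤ m := by exact_mod_cast hm1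
  have hmR : 4 * A ^ 2 + 1 / C₁ ^ 2 ≤ m :=
    (Nat.le_ceil _).trans (by exact_mod_cast (show ⌈4 * A ^ 2 + 1 / C₁ ^ 2⌉₊ ≤ m by omega))
  have hCinv : 0 < 1 / C₁ ^ 2 := by positivity
  have hsq : √(m : ℝ) * √m = m := Real.mul_self_sqrt (by positivity)
  have hsA : 2 * A ≤ √(m : ℝ) := Real.le_sqrt_of_sq_le (by nlinarith)
  have hsC : 1 ≤ C₁ * √(m : ℝ) := by
    have h1 : 1 / C₁ ≤ √(m : ℝ) := Real.le_sqrt_of_sq_le (by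
      rw [div_pow, one_pow]
      nlinarith [sq_nonneg A])
    rwa [div_le_iff₀ hC₁, mul_comm] at h1
  have hAm : A * √(m : ℝ) ≤ m / 2 := by nlinarith [Real.sqrt_nonneg (m : ℝ)]
  have hs6 : √((6 * m : ℕ) : ℝ) ≤ 3 * √(m : ℝ) := by
    rw [Real.sqrt_le_left (by positivity)]
    push_cast
    nlinarith
  have hs6' : 2 * √(m : ℝ) ≤ √((6 * m : ℕ) : ℝ) := by
    refine Real.le_sqrt_of_sq_le ?_
    push_cast
    nlinarith
  set N : ℤ := ⌊C₁ * √((6 * m : ℕ) : ℝ)⌋ with hN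
  have hNle : (N : ℝ) ≤ 3 * C₁ * √(m : ℝ) :=
    (Int.floor_le _).trans (by nlinarith)
  have hNge : C₁ * √(m : ℝ) ≤ N := by
    have h1 := Int.lt_floor_add_one (C₁ * √((6 * m : ℕ) : ℝ))
    rw [← hN] at h1
    nlinarith
  have hmain := F3_lower C₁ m hm1 hAm x₀ x₁ y₀ y₁ N hNle hx₀ hx₁ hy₀ hy₁
  rw [← hA, ← hK] at hmain
  have hN4 : C₁ ^ 4 * (m : ℝ) ^ 2 ≤ (N : ℝ) ^ 4 := by
    calc C₁ ^ 4 * (m : ℝ) ^ 2 = C₁ ^ 4 * (√(m : ℝ) * √m) ^ 2 := by rw [hsq]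
      _ = (C₁ * √(m : ℝ)) ^ 4 := by ring
      _ ≤ _ := by gcongr
  have hNpos : (0 : ℝ) < (N : ℝ) ^ 4 := lt_of_lt_of_le (by positivity) hN4
  rw [div_le_iff₀ hNpos, div_mul_eq_mul_div, div_le_iff₀ hK0]
  set Φ : ℝ := (F3 (6 * m) x₀ x₁ y₀ y₁ (x₀ + x₁ - y₁) (y₀ + y₁ - x₀) : ℝ) with hΦ
  have hΦ0 : 0 ≤ Φ := Nat.cast_nonneg _
  calc C₁ ^ 4 * (6 : ℝ) ^ (6 * m) ≤ C₁ ^ 4 * (K * m ^ 2 * Φ) := by gcongr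
    _ = Φ * (C₁ ^ 4 * m ^ 2) * K := by ring
    _ ≤ Φ * (N : ℝ) ^ 4 * K := by gcongr
end

section
/- Fix ℓ ≥ 1. For n ≥ 1 and w ∈ ℤ^ℓ let P(n, w) := N(n,w)/(ℓ+1)ⁿ, where N(n,w) is the number of functions x : Fin n → {0, 1, …, ℓ} such that for each j ∈ {1, …, ℓ} the number of coordinates i with x_i = j equals w_j. Then: (i) there exists C > 0 such that for all n ≥ 1 and all w ∈ ℤ^ℓ, P(n, w) ≤ C/n^{ℓ/2}; (ii) for every C₁ > 0 there exist C > 0 and n₀ such that for all n ≥ n₀ and all w ∈ ℤ^ℓ with |w_j − n/(ℓ+1)| ≤ C₁·√n for every j ∈ {1, …, ℓ}, one has P(n, w) ≥ 1/(C·n^{ℓ/2}). -/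
/-!
The multinomial distribution is a product of Poisson distributions conditioned on its total, and
Poisson probabilities are easy to bound uniformly.

If some word has letter counts `k 0, …, k ℓ` (with sum `n`), the permutations of the positions act
transitively on the words with these counts, with stabilizers of order `∏ j, (k j)!`; hence the
number of words is `n! / ∏ j, (k j)!` (`Pcount_mul_prod_factorial`). Put `a = n / (ℓ + 1)`, the mean
number of occurrences of each letter. Stirling's bounds give

* `c * (√a * a ^ k * exp (-a)) ≤ k!` for all `k` and all `a > 0` (`poisson_upper`), and
* `k! ≤ C * (√a * a ^ k * exp (-a))` whenever `|k - a| ≤ D √a` and `a` is large (`poisson_lower`),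

that is, the Poisson distribution with mean `a` has all its probabilities `O(1 / √a)`, and
probabilities of exactly this order within `O(√a)` of the mean. In the product over the `ℓ + 1`
letters the `k j` only enter through their sum `n`, and the product is, up to constants,
`√n ^ (ℓ + 1) * n ^ n * exp (-n) / (ℓ + 1) ^ n`. Dividing `n! ≍ √n * n ^ n * exp (-n)` by it gives
both parts of the theorem.
-/

/-- `Pcount ℓ n w` is the number of functions `x : Fin n → {0,…,ℓ}` such that for each
`j ∈ {1,…,ℓ}` the number of coordinates `i` with `x i = j` equals `w j`. -/
noncomputable def Pcount (ℓ n : ℕ) (w : Fin ℓ → ℤ) : ℕ :=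
  Nat.card {x : Fin n → Fin (ℓ + 1) //
    ∀ j : Fin ℓ, ((Finset.univ.filter fun i => x i = j.succ).card : ℤ) = w j}

/-! ### Counting words with given letter counts -/

/-- Words with the letter counts of `f` form one orbit under permuting positions, and the stabilizer
of `f` has order `∏ j, (k j)!`. -/
lemma Pcount_mul_prod_factorial {ℓ n : ℕ} (f : Fin n → Fin (ℓ + 1)) (k : Fin (ℓ + 1) → ℕ)
    (hf : ∀ j, (Finset.univ.filter fun i => f i = j).card = k j) :
    Pcount ℓ n (fun j => (k j.succ : ℤ)) * ∏ j, (k j).factorial = n.factorial := by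
  classical
  set S : Finset (Fin n → Fin (ℓ + 1)) := Finset.univ.filter fun x =>
    ∀ j : Fin ℓ, ((Finset.univ.filter fun i => x i = j.succ).card : ℤ) = k j.succ with hS
  have hP : Pcount ℓ n (fun j => (k j.succ : ℤ)) = S.card := by
    rw [Pcount, Nat.card_eq_fintype_card, Fintype.card_subtype]
  have hsum : ∀ x : Fin n → Fin (ℓ + 1),
      ∑ j, (Finset.univ.filter fun i => x i = j).card = n := by
    intro x
    have := Finset.card_eq_sum_card_fiberwise (s := Finset.univ) (t := Finset.univ) (f := x)
      (by intro a _; simp)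
    simpa using this.symm
  -- The count of the letter `0` is determined by the other counts.
  have hall : ∀ x ∈ S, ∀ j, (Finset.univ.filter fun i => x i = j).card = k j := by
    intro x hx
    have hx' : ∀ j : Fin ℓ, (Finset.univ.filter fun i => x i = j.succ).card = k j.succ := by
      intro j
      have := (Finset.mem_filter.1 hx).2 j
      exact_mod_cast this
    intro j
    refine Fin.cases ?_ hx' j
    have h1 := hsum x
    have h2 := hsum f
    rw [Fin.sum_univ_succ] at h1 h2
    simp only [hx'] at h1
    simp only [hf] at h2
    omega
  have hmaps : ∀ g ∈ (Finset.univ : Finset (Equiv.Perm (Fin n))), f ∘ g ∈ S := by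
    intro g _
    refine Finset.mem_filter.2 ⟨Finset.mem_univ _, fun j => ?_⟩
    rw [← hf j.succ]
    norm_cast
    refine Finset.card_bij (fun i _ => g i) ?_ ?_ ?_
    · intro a ha; simpa using ha
    · intro a _ b _ h; exact g.injective h
    · intro b hb
      exact ⟨g.symm b, by simpa using hb, by simp⟩
  have hfib : ∀ x ∈ S, (Finset.univ.filter fun g : Equiv.Perm (Fin n) => f ∘ g = x).card
      = ∏ j, (k j).factorial := by
    intro x hx
    have e : ∀ c, {a // x a = c} ≃ {b // f b = c} := fun c =>
      Fintype.equivOfCardEq (by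
        rw [Fintype.card_subtype, Fintype.card_subtype, hf, hall x hx])
    -- `h` carries `f` to `x`, so composition with `h⁻¹` carries the fiber to the stabilizer of `f`.
    obtain ⟨h, hh⟩ : ∃ h : Equiv.Perm (Fin n), ∀ i, f (h i) = x i :=
      ⟨Equiv.ofFiberEquiv e, fun i => Equiv.ofFiberEquiv_map e i⟩
    have hstab := DomMulAct.stabilizer_card f
    simp only [Fintype.card_subtype, hf] at hstab
    rw [← hstab]
    refine Finset.card_equiv (Equiv.mulRight h⁻¹) fun g => ?_
    simp only [Finset.mem_filter, Finset.mem_univ, true_and, Equiv.coe_mulRight, funext_iff,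
      Function.comp_apply, Equiv.Perm.mul_apply]
    constructor
    · intro H i
      rw [H, ← hh]; simp
    · intro H i
      have := H (h i)
      simpa [hh] using this
  have := Finset.card_eq_sum_card_fiberwise (s := (Finset.univ : Finset (Equiv.Perm (Fin n))))
    (t := S) (f := fun g : Equiv.Perm (Fin n) => f ∘ g) hmaps
  rw [Finset.sum_congr rfl hfib, Finset.sum_const, smul_eq_mul, Finset.card_univ,
    Fintype.card_perm, Fintype.card_fin] at this
  rw [hP, ← this]

/-- Any counts with sum `n` are the letter counts of some word of length `n`. -/
lemma exists_word {ℓ n : ℕ} (k : Fin (ℓ + 1) → ℕ) (hk : ∑ j, k j = n) :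
    ∃ f : Fin n → Fin (ℓ + 1), ∀ j, (Finset.univ.filter fun i => f i = j).card = k j := by
  subst hk
  refine ⟨fun i => (finSigmaFinEquiv.symm i).1, fun j => ?_⟩
  rw [← Fintype.card_subtype, ← Fintype.card_fin (k j)]
  exact Fintype.card_congr ((finSigmaFinEquiv.symm.subtypeEquiv
    (q := fun p : (i : Fin (ℓ + 1)) × Fin (k i) => p.1 = j) fun _ => Iff.rfl).trans
    (Equiv.sigmaSubtype j))

/-! ### Poisson probabilities -/

lemma factorial_le (n : ℕ) (hn : 1 ≤ n) :
    (n.factorial : ℝ) ≤ Real.exp 1 * (√n * (n : ℝ) ^ n * Real.exp (-n)) := by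
  obtain ⟨m, rfl⟩ : ∃ m, n = m + 1 := ⟨n - 1, by omega⟩
  have h := Stirling.stirlingSeq'_antitone (Nat.zero_le m)
  simp only [Function.comp, Nat.succ_eq_add_one, zero_add, Stirling.stirlingSeq_one] at h
  rw [Stirling.stirlingSeq, div_le_iff₀ (by positivity)] at h
  refine h.trans (le_of_eq ?_)
  rw [Real.sqrt_mul (by norm_num), div_pow, ← Real.exp_nat_mul, Real.exp_neg, mul_one]
  field_simp

lemma le_factorial (n : ℕ) :
    √n * (n : ℝ) ^ n * Real.exp (-n) ≤ n.factorial := by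
  have hn : (0 : ℝ) ≤ n := Nat.cast_nonneg n
  calc √n * (n : ℝ) ^ n * Real.exp (-n) = √n * (n / Real.exp 1) ^ n := by
        rw [div_pow, ← Real.exp_nat_mul, Real.exp_neg, mul_one]
        field_simp
    _ ≤ √(2 * Real.pi * n) * (n / Real.exp 1) ^ n := by
        gcongr
        nlinarith [Real.pi_gt_three]
    _ ≤ n.factorial := Stirling.le_factorial_stirling n

/-- Every probability of the Poisson distribution with mean `a` is `O(1 / √a)`. -/
lemma poisson_upper (a : ℝ) (ha : 0 < a) (k : ℕ) :
    √a * a ^ k * Real.exp (-a) ≤ 2 * Real.exp 1 * k.factorial := by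
  have hquad : ∀ t : ℝ, 0 ≤ t → t ^ 2 * Real.exp (-t) ≤ 2 := by
    intro t ht
    rw [Real.exp_neg, ← div_eq_mul_inv, div_le_iff₀ (Real.exp_pos _)]
    nlinarith [Real.quadratic_le_exp_of_nonneg ht]
  have he : 1 ≤ Real.exp 1 := Real.one_le_exp (by norm_num)
  rcases Nat.eq_zero_or_pos k with rfl | hk
  · simp only [pow_zero, mul_one, Nat.factorial_zero, Nat.cast_one]
    have h1 : √a ≤ 1 + a := by
      nlinarith [Real.sq_sqrt ha.le, sq_nonneg (√a - 1), Real.sqrt_nonneg a]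
    have h2 : (1 + a) * Real.exp (-a) ≤ 1 := by
      rw [Real.exp_neg, ← div_eq_mul_inv, div_le_iff₀ (Real.exp_pos _)]
      linarith [Real.add_one_le_exp a]
    nlinarith [mul_le_mul_of_nonneg_right h1 (Real.exp_pos (-a)).le]
  · have hk' : (0 : ℝ) < k := by exact_mod_cast hk
    obtain ⟨t, ht, rfl⟩ : ∃ t : ℝ, 0 < t ∧ a = t * k :=
      ⟨a / k, by positivity, by field_simp⟩
    -- In units of `k`, the claim is that `√t * (t * exp (1 - t)) ^ k` is bounded.
    have key : √t * (t * Real.exp (1 - t)) ^ k ≤ 2 * Real.exp 1 := by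
      have hle1 : t * Real.exp (1 - t) ≤ 1 := by
        have := Real.add_one_le_exp (t - 1)
        rw [show 1 - t = -(t - 1) by ring, Real.exp_neg, ← div_eq_mul_inv,
          div_le_iff₀ (Real.exp_pos _)]
        linarith
      have hpos : 0 ≤ t * Real.exp (1 - t) := by positivity
      rcases le_total t 1 with h | h
      · have h1 : √t ≤ 1 := Real.sqrt_le_one.2 h
        have h2 := pow_le_one₀ (n := k) hpos hle1
        nlinarith [Real.sqrt_nonneg t, pow_nonneg hpos k, mul_le_one₀ h1 (pow_nonneg hpos k) h2]
      · have h1 : √t ≤ t := by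
          rw [Real.sqrt_le_left (by linarith)]; nlinarith
        have h2 : (t * Real.exp (1 - t)) ^ k ≤ t * Real.exp (1 - t) :=
          pow_le_of_le_one hpos hle1 hk.ne'
        calc √t * (t * Real.exp (1 - t)) ^ k ≤ t * (t * Real.exp (1 - t)) := by gcongr
          _ = t ^ 2 * Real.exp (-t) * Real.exp 1 := by
            rw [show 1 - t = -t + 1 by ring, Real.exp_add]; ring
          _ ≤ 2 * Real.exp 1 := by gcongr; exact hquad t ht.le
    calc √(t * k) * (t * k) ^ k * Real.exp (-(t * k))
        = (√t * (t * Real.exp (1 - t)) ^ k) * (√k * (k : ℝ) ^ k * Real.exp (-k)) := by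
          rw [Real.sqrt_mul ht.le, mul_pow, mul_pow, ← Real.exp_nat_mul,
            show -(t * (k : ℝ)) = k * (1 - t) + -k by ring, Real.exp_add]
          ring
      _ ≤ 2 * Real.exp 1 * k.factorial := by
          gcongr
          exact le_factorial k

/-- Within `D` standard deviations of its mean `a`, the Poisson distribution has probabilities of
order at least `1 / √a`; the bound `D ^ 2 + 1 ≤ a` keeps this range away from `0`. -/
lemma poisson_lower (D a : ℝ) (ha : D ^ 2 + 1 ≤ a) (k : ℕ)
    (hk : |(k : ℝ) - a| ≤ D * √a) :
    (k.factorial : ℝ) ≤ 2 * Real.exp (1 + D ^ 2) * (√a * a ^ k * Real.exp (-a)) := by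
  have ha0 : 0 < a := by nlinarith
  have hs := Real.sq_sqrt ha0.le
  have hs0 := Real.sqrt_pos.2 ha0
  have hDs : D < √a := Real.lt_sqrt_of_sq_lt (by linarith)
  have hDa : D * √a < a := by nlinarith
  obtain ⟨hk1, hk2⟩ := abs_le.1 hk
  have hk0 : (0 : ℝ) < k := by linarith
  have hk1' : 1 ≤ k := by
    have : 0 < k := by exact_mod_cast hk0
    omega
  have hsq : √(k : ℝ) ≤ 2 * √a := by
    rw [Real.sqrt_le_left (by positivity)]
    nlinarith
  -- `log (k / a) ≤ k / a - 1` makes the exponent at most `(k - a) ^ 2 / a ≤ D ^ 2`.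
  have hpow : (k : ℝ) ^ k * Real.exp (-k) ≤ Real.exp (D ^ 2) * (a ^ k * Real.exp (-a)) := by
    have h1 : (k : ℝ) ≤ a * Real.exp (k / a - 1) := by
      have := Real.add_one_le_exp ((k : ℝ) / a - 1)
      calc (k : ℝ) = a * (k / a - 1 + 1) := by field_simp; ring
        _ ≤ _ := by gcongr
    have h2 : (k : ℝ) ^ k ≤ a ^ k * Real.exp (k * (k / a - 1)) := by
      rw [Real.exp_nat_mul, ← mul_pow]
      gcongr
    have h3 : (k : ℝ) * (k / a - 1) + -k ≤ D ^ 2 + -a := by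
      have h4 : ((k : ℝ) - a) ^ 2 ≤ D ^ 2 * a := by
        rw [← sq_abs]
        calc |(k : ℝ) - a| ^ 2 ≤ (D * √a) ^ 2 := by gcongr
          _ = D ^ 2 * a := by rw [mul_pow, hs]
      have h5 : (k : ℝ) * (k / a - 1) + -k = ((k : ℝ) - a) ^ 2 / a - a := by
        field_simp; ring
      rw [h5]
      have := (div_le_iff₀ ha0).2 h4
      linarith
    calc (k : ℝ) ^ k * Real.exp (-k) ≤ a ^ k * Real.exp (k * (k / a - 1)) * Real.exp (-k) := by
          gcongr
      _ = a ^ k * Real.exp (k * (k / a - 1) + -k) := by rw [Real.exp_add]; ring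
      _ ≤ a ^ k * Real.exp (D ^ 2 + -a) := by gcongr
      _ = _ := by rw [Real.exp_add]; ring
  calc (k.factorial : ℝ) ≤ Real.exp 1 * (√k * (k : ℝ) ^ k * Real.exp (-k)) := factorial_le k hk1'
    _ = Real.exp 1 * (√k * ((k : ℝ) ^ k * Real.exp (-k))) := by ring
    _ ≤ Real.exp 1 * ((2 * √a) * (Real.exp (D ^ 2) * (a ^ k * Real.exp (-a)))) := by gcongr
    _ = _ := by rw [Real.exp_add]; ring

/-! ### The multinomial distribution -/

/-- The product over the letters of the Poisson weights with mean `a = n / (ℓ + 1)` only depends on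
the total count `n`. -/
lemma prod_weights {ℓ n : ℕ} (k : Fin (ℓ + 1) → ℕ) (hk : ∑ j, k j = n) (a B : ℝ)
    (ha : a * ((ℓ : ℝ) + 1) = n) :
    (∏ j, B * (√a * a ^ k j * Real.exp (-a))) * ((ℓ : ℝ) + 1) ^ n
      = (B * √a) ^ (ℓ + 1) * ((n : ℝ) ^ n * Real.exp (-n)) := by
  have h1 : ∀ j, B * (√a * a ^ k j * Real.exp (-a)) = (B * √a) * a ^ k j * Real.exp (-a) :=
    fun j => by ring
  simp only [h1, Finset.prod_mul_distrib, Finset.prod_pow_eq_pow_sum, hk, Finset.prod_const,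
    Finset.card_univ, Fintype.card_fin]
  rw [← Real.exp_nat_mul, ← ha, mul_pow _ _ n]
  push_cast
  rw [show ((ℓ : ℝ) + 1) * -a = -(a * (ℓ + 1)) by ring]
  ring

theorem stmt8 (ℓ : ℕ) (hℓ : 1 ≤ ℓ) :
    (∃ C : ℝ, 0 < C ∧ ∀ n : ℕ, 1 ≤ n → ∀ w : Fin ℓ → ℤ,
      (Pcount ℓ n w : ℝ) / ((ℓ : ℝ) + 1) ^ n ≤ C / (n : ℝ) ^ ((ℓ : ℝ) / 2)) ∧
    (∀ C₁ : ℝ, 0 < C₁ →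
      ∃ (C : ℝ) (n₀ : ℕ), 0 < C ∧ ∀ n : ℕ, n₀ ≤ n → ∀ w : Fin ℓ → ℤ,
        (∀ j : Fin ℓ, |(w j : ℝ) - (n : ℝ) / ((ℓ : ℝ) + 1)| ≤ C₁ * Real.sqrt n) →
        1 / (C * (n : ℝ) ^ ((ℓ : ℝ) / 2)) ≤ (Pcount ℓ n w : ℝ) / ((ℓ : ℝ) + 1) ^ n) := by
  have hm : (0 : ℝ) < (ℓ : ℝ) + 1 := by positivity
  have hrpow : ∀ n : ℕ, (n : ℝ) ^ ((ℓ : ℝ) / 2) = √n ^ ℓ := fun n => by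
    rw [Real.rpow_div_two_eq_sqrt _ (Nat.cast_nonneg n), Real.rpow_natCast]
  constructor
  · refine ⟨Real.exp 1 * (2 * Real.exp 1 * √((ℓ : ℝ) + 1)) ^ (ℓ + 1), by positivity, ?_⟩
    intro n hn w
    have hn0 : (0 : ℝ) < n := by exact_mod_cast hn
    have hs0 := Real.sqrt_pos.2 hn0
    rw [hrpow]
    by_cases hw : Pcount ℓ n w = 0
    · rw [hw]; simp only [Nat.cast_zero, zero_div]; positivity
    obtain ⟨⟨f, hf⟩⟩ : Nonempty {x : Fin n → Fin (ℓ + 1) //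
        ∀ j : Fin ℓ, ((Finset.univ.filter fun i => x i = j.succ).card : ℤ) = w j} :=
      (Nat.card_ne_zero.1 hw).1
    set k : Fin (ℓ + 1) → ℕ := fun j => (Finset.univ.filter fun i => f i = j).card with hk
    have hcount := Pcount_mul_prod_factorial f k fun _ => rfl
    rw [show (fun j : Fin ℓ => (k j.succ : ℤ)) = w from funext hf] at hcount
    have hsum : ∑ j, k j = n := by
      have := Finset.card_eq_sum_card_fiberwise (s := Finset.univ) (t := Finset.univ) (f := f)
        (by intro a _; simp)
      simpa using this.symm
    obtain ⟨a, ha⟩ : ∃ a : ℝ, a * ((ℓ : ℝ) + 1) = n := ⟨n / (ℓ + 1), by field_simp⟩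
    have ha0 : 0 < a := pos_of_mul_pos_left (ha ▸ hn0) hm.le
    have hc : (Pcount ℓ n w : ℝ) * ∏ j, ((k j).factorial : ℝ) = n.factorial := by
      exact_mod_cast hcount
    set E : ℝ := 2 * Real.exp 1 with hE
    have hE0 : 0 < E := by positivity
    have hprod : ∏ j, E⁻¹ * (√a * a ^ k j * Real.exp (-a)) ≤ ∏ j, ((k j).factorial : ℝ) := by
      refine Finset.prod_le_prod (fun j _ => by positivity) fun j _ => ?_
      rw [inv_mul_le_iff₀ hE0]
      exact poisson_upper a ha0 (k j)
    have hsn : √(n : ℝ) = √a * √((ℓ : ℝ) + 1) := by rw [← ha, Real.sqrt_mul ha0.le]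
    have hweights := prod_weights k hsum a E⁻¹ ha
    have h1 : (Pcount ℓ n w : ℝ) * ((E⁻¹ * √a) ^ (ℓ + 1) * ((n : ℝ) ^ n * Real.exp (-n)))
        ≤ Real.exp 1 * √n * ((n : ℝ) ^ n * Real.exp (-n)) * ((ℓ : ℝ) + 1) ^ n := by
      rw [← hweights, ← mul_assoc (Pcount ℓ n w : ℝ)]
      refine mul_le_mul_of_nonneg_right ?_ (by positivity)
      calc _ ≤ (Pcount ℓ n w : ℝ) * ∏ j, ((k j).factorial : ℝ) := by gcongr
        _ = n.factorial := hc
        _ ≤ _ := factorial_le n hn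
        _ = _ := by ring
    have hX : 0 < (n : ℝ) ^ n * Real.exp (-n) := by positivity
    have h2 : (Pcount ℓ n w : ℝ) * (E⁻¹ * √a) ^ (ℓ + 1)
        ≤ Real.exp 1 * √n * ((ℓ : ℝ) + 1) ^ n := by
      refine le_of_mul_le_mul_right ?_ hX
      linarith
    rw [div_le_div_iff₀ (by positivity) (by positivity)]
    have hY : 0 < √(n : ℝ) := hs0
    refine le_of_mul_le_mul_right ?_ hY
    calc (Pcount ℓ n w : ℝ) * √n ^ ℓ * √n = (Pcount ℓ n w : ℝ) * √n ^ (ℓ + 1) := by ring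
      _ = (Pcount ℓ n w : ℝ) * (E⁻¹ * √a) ^ (ℓ + 1) * (E * √((ℓ : ℝ) + 1)) ^ (ℓ + 1) := by
        rw [mul_assoc, ← mul_pow, hsn]; congr 2; field_simp
      _ ≤ Real.exp 1 * √n * ((ℓ : ℝ) + 1) ^ n * (E * √((ℓ : ℝ) + 1)) ^ (ℓ + 1) := by gcongr
      _ = _ := by ring
  · intro C₁ hC₁
    -- `D * √(n / (ℓ + 1)) = (ℓ + 1) * C₁ * √n`: the count of the letter `0` deviates from the mean
    -- by at most the sum of the other `ℓ` deviations.
    set D : ℝ := C₁ * ((ℓ : ℝ) + 1) * √((ℓ : ℝ) + 1) with hD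
    have hD0 : 0 < D := by positivity
    set E : ℝ := 2 * Real.exp (1 + D ^ 2) with hE
    have hE0 : 0 < E := by positivity
    refine ⟨E ^ (ℓ + 1), ⌈(D ^ 2 + 1) * ((ℓ : ℝ) + 1)⌉₊, by positivity, ?_⟩
    intro n hn w hw
    have hn' : (D ^ 2 + 1) * ((ℓ : ℝ) + 1) ≤ n := Nat.ceil_le.1 hn
    have hn0 : (0 : ℝ) < n := lt_of_lt_of_le (by positivity) hn'
    have hs0 := Real.sqrt_pos.2 hn0
    rw [hrpow]
    obtain ⟨a, haD⟩ : ∃ a : ℝ, a = (n : ℝ) / ((ℓ : ℝ) + 1) := ⟨_, rfl⟩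
    have ha : a * ((ℓ : ℝ) + 1) = n := by rw [haD]; field_simp
    have ha1 : D ^ 2 + 1 ≤ a := by
      refine le_of_mul_le_mul_right ?_ hm
      rw [ha]; exact hn'
    have ha0 : 0 < a := by nlinarith
    have hsn : √(n : ℝ) = √a * √((ℓ : ℝ) + 1) := by rw [← ha, Real.sqrt_mul ha0.le]
    have hDa : D * √a = ((ℓ : ℝ) + 1) * (C₁ * √n) := by rw [hsn, hD]; ring
    rw [← haD] at hw
    have hDlt : D * √a < a := by
      have hs := Real.sq_sqrt ha0.le
      have h1 := Real.sqrt_pos.2 ha0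
      have h2 : D < √a := Real.lt_sqrt_of_sq_lt (by linarith)
      nlinarith
    set v : Fin (ℓ + 1) → ℤ := Fin.cons ((n : ℤ) - ∑ j, w j) w with hv
    have hvsum : ∑ j, v j = n := by
      rw [Fin.sum_univ_succ]; simp [hv]
    have hvdev : ∀ j, |(v j : ℝ) - a| ≤ D * √a := by
      have hCn : 0 ≤ C₁ * √(n : ℝ) := by positivity
      have hℓ0 : (0 : ℝ) ≤ ℓ := Nat.cast_nonneg ℓ
      intro j
      rw [hDa]
      refine Fin.cases ?_ (fun i => ?_) j
      · have h1 : ((v 0 : ℤ) : ℝ) - a = -∑ j, ((w j : ℝ) - a) := by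
          simp only [hv, Fin.cons_zero, Finset.sum_sub_distrib, Finset.sum_const,
            Finset.card_univ, Fintype.card_fin, nsmul_eq_mul]
          push_cast
          linarith
        rw [h1, abs_neg]
        calc |∑ j, ((w j : ℝ) - a)| ≤ ∑ j, |(w j : ℝ) - a| := Finset.abs_sum_le_sum_abs _ _
          _ ≤ ∑ _j : Fin ℓ, C₁ * √n := Finset.sum_le_sum fun j _ => hw j
          _ = ℓ * (C₁ * √n) := by simp
          _ ≤ _ := by nlinarith
      · simp only [hv, Fin.cons_succ]
        have := hw i
        nlinarith
    have hvpos : ∀ j, 0 ≤ v j := by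
      intro j
      have h1 := (abs_le.1 (hvdev j)).1
      have h2 : (0 : ℝ) < v j := by linarith
      exact_mod_cast h2.le
    choose k hk using fun j => Int.eq_ofNat_of_zero_le (hvpos j)
    have hsum : ∑ j, k j = n := by
      have h1 := hvsum
      simp only [hk] at h1
      exact_mod_cast h1
    obtain ⟨f, hf⟩ := exists_word k hsum
    have hcount := Pcount_mul_prod_factorial f k hf
    rw [show (fun j : Fin ℓ => (k j.succ : ℤ)) = w from
      funext fun j => by rw [← hk]; simp [hv]] at hcount
    have hc : (Pcount ℓ n w : ℝ) * ∏ j, ((k j).factorial : ℝ) = n.factorial := by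
      exact_mod_cast hcount
    have hprod : ∏ j, ((k j).factorial : ℝ) ≤ ∏ j, E * (√a * a ^ k j * Real.exp (-a)) := by
      refine Finset.prod_le_prod (fun j _ => by positivity) fun j _ => ?_
      refine poisson_lower D a ha1 (k j) ?_
      have := hvdev j
      rw [hk] at this
      exact_mod_cast this
    have hweights := prod_weights k hsum a E ha
    have hX : 0 < (n : ℝ) ^ n * Real.exp (-n) := by positivity
    have h2 : √n * ((ℓ : ℝ) + 1) ^ n ≤ (Pcount ℓ n w : ℝ) * (E * √a) ^ (ℓ + 1) := by
      refine le_of_mul_le_mul_right ?_ hX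
      rw [mul_assoc (Pcount ℓ n w : ℝ), ← hweights, ← mul_assoc (Pcount ℓ n w : ℝ)]
      calc √n * ((ℓ : ℝ) + 1) ^ n * ((n : ℝ) ^ n * Real.exp (-n))
          = (√n * (n : ℝ) ^ n * Real.exp (-n)) * ((ℓ : ℝ) + 1) ^ n := by ring
        _ ≤ n.factorial * ((ℓ : ℝ) + 1) ^ n := by gcongr; exact le_factorial n
        _ = (Pcount ℓ n w : ℝ) * (∏ j, ((k j).factorial : ℝ)) * ((ℓ : ℝ) + 1) ^ n := by rw [hc]
        _ ≤ _ := by gcongr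
    have hsa : √a ≤ √n := by
      apply Real.sqrt_le_sqrt
      rw [← ha]
      nlinarith [(Nat.cast_nonneg ℓ : (0 : ℝ) ≤ ℓ)]
    rw [div_le_div_iff₀ (by positivity) (by positivity)]
    refine le_of_mul_le_mul_right ?_ hs0
    calc 1 * ((ℓ : ℝ) + 1) ^ n * √n = √n * ((ℓ : ℝ) + 1) ^ n := by ring
      _ ≤ (Pcount ℓ n w : ℝ) * (E * √a) ^ (ℓ + 1) := h2
      _ ≤ (Pcount ℓ n w : ℝ) * (E * √n) ^ (ℓ + 1) := by gcongr
      _ = _ := by ring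
end

section
/- Let p ≥ 3 be prime and let A be the {0,1}-matrix with rows indexed by pairs (j, a) with j ∈ {1, …, p} and a ∈ {0, 1, …, p−2} (so p(p−1) rows), columns indexed by pairs (b, d) ∈ (ZMod p)² with (b, d) ≠ (p−1, 0) (so p²−1 columns), and entry A[(j,a),(b,d)] = 1 if b + (j−1)·d = a in ZMod p and 0 otherwise. Then A has full row rank p(p−1) over ℝ, and there exist integer matrices B ∈ ℤ^{(p²−1)×p(p−1)} and K ∈ ℤ^{(p²−1)×(p−1)} such that for every w ∈ ℝ^{p(p−1)} the real solution set {m ∈ ℝ^{p²−1} : A·m = w} equals {(1/p)·B·w + K·v : v ∈ ℝ^{p−1}}. Moreover, for every integer vector w ∈ ℤ^{p(p−1)}: if (1/p)·B·w is not an integer vector, then the system A·m = w has no integer solution m ∈ ℤ^{p²−1}. -/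
/-!
Identify the columns with the points of the affine plane over `ZMod p` other than `(-1, 0)`, and the
rows with the lines `b + j * d = a`, `a ≠ -1`, which are exactly the lines transversal to the lines
`d = const` that miss the point `(-1, 0)`. Then `A` is a Radon transform, and it is inverted by
summing over all lines through a point.

* A function of `d` alone with total sum zero has all line sums zero (`lineSum_fibre`). These
  functions are parametrised by their values at `d ≠ 0`; this is the matrix `K` (`kerCoeff`).
* Given `w`, define the missing line values so that all parallel classes have the same total and
  the line `b = -1` has value `0` (`extCoeff`). With `u j a` denoting the resulting values,
  `N b d = ∑ j, (u j (b + j d) - u j (-1 + j d))` has line sums `p * u` (`lineSum_backProj`).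
  This is the matrix `B`.
* Conversely, for every `m` the back projection of its line sums is `p * (m b d - m (-1) d)`
  (`backProj_lineSum`).

Hence, given a solution `m`, subtracting the kernel element with values `m (-1, d)` gives a solution
that vanishes on the line `b = -1`, and it must be `p⁻¹ B w`. This describes the solution set, and
since the correction preserves integrality it also shows that an integer solution forces
`p ∣ B w`. Surjectivity of `A`, hence the rank, follows from the description of the solution set.
-/

namespace Radon

variable {p : ℕ} [NeZero p]

/-- The sum of `f` over the line `b + j * d = a`, parametrised by `d`. -/
def lineSum (f : ZMod p → ZMod p → ℝ) (j a : ZMod p) : ℝ := ∑ d, f (a - j * d) d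

/-- Sum of the line values `u` over the lines through `(b, d)`, normalised to vanish at `b = -1`. -/
def backProj (u : ZMod p → ZMod p → ℝ) (b d : ZMod p) : ℝ :=
  ∑ j, (u j (b + j * d) - u j (-1 + j * d))

/-- Coefficient of `w r` in the extension of `w` to all lines `(j, a)`. For `a = -1` the value
is `∑ c, w (0, c) - ∑ c, w (j, c)`, which gives all parallel classes the same total. -/
def extCoeff (j a : ZMod p) (r : Fin p × Fin (p - 1)) : ℤ :=
  if a = -1 then
    (if (r.1.val : ZMod p) = 0 then 1 else 0) - (if (r.1.val : ZMod p) = j then 1 else 0)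
  else if (r.1.val : ZMod p) = j ∧ (r.2.val : ZMod p) = a then 1 else 0

/-- The extension of line values `w`, given for `a ≠ -1`, to all `(j, a)`. -/
def ext (w : Fin p × Fin (p - 1) → ℝ) (j a : ZMod p) : ℝ := ∑ r, (extCoeff j a r : ℝ) * w r

/-- Coefficient of `v i` in the function of `d` with values `v i` at `d = i + 1` and total sum
zero. -/
def kerCoeff (d : ZMod p) (i : Fin (p - 1)) : ℤ :=
  if d = 0 then -1 else if d = (i.val : ZMod p) + 1 then 1 else 0

lemma sum_affine [Fact p.Prime] (g : ZMod p → ℝ) (c : ZMod p) {k : ZMod p} (hk : k ≠ 0) :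
    ∑ d, g (c + k * d) = ∑ a, g a :=
  Fintype.sum_equiv ((Equiv.mulLeft₀ k hk).trans (Equiv.addLeft c)) _ _ (fun d => by simp)

/-- Sum over the `p` points of the line `(i, a)`. The class `i` contributes `p * u i a`, and for
`j ≠ i` the points meet each line of the class `j` once, which contributes `T`. The subtracted terms of
`backProj` are the same sum for the line `(0, -1)`, where `u` vanishes, so the totals `T` cancel. -/
lemma lineSum_backProj [Fact p.Prime] (u : ZMod p → ZMod p → ℝ) (T : ℝ)
    (hT : ∀ j, ∑ a, u j a = T) (h0 : u 0 (-1) = 0) (i a : ZMod p) :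
    lineSum (backProj u) i a = p * u i a := by
  have key : ∀ (i' a' : ZMod p),
      ∑ j, ∑ d, u j (a' - i' * d + j * d) = p * u i' a' + ∑ j ∈ Finset.univ.erase i', T := by
    intro i' a'
    rw [← Finset.add_sum_erase _ _ (Finset.mem_univ i')]
    congr 1
    · simp [ZMod.card]
    · refine Finset.sum_congr rfl fun j hj => ?_
      rw [← hT j, ← sum_affine (u j) a' (sub_ne_zero.2 (Finset.ne_of_mem_erase hj))]
      exact Finset.sum_congr rfl fun d _ => by congr 1; ring
  have h1 := key i a
  have h2 := key 0 (-1)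
  simp only [lineSum, backProj]
  rw [Finset.sum_comm]
  simp only [Finset.sum_sub_distrib]
  rw [h1]
  simp only [zero_mul, sub_zero, h0, mul_zero, zero_add] at h2
  rw [h2]
  simp

lemma backProj_lineSum [Fact p.Prime] (f : ZMod p → ZMod p → ℝ) (b d : ZMod p) :
    backProj (lineSum f) b d = p * (f b d - f (-1) d) := by
  have key : ∀ b' : ZMod p, ∑ j, lineSum f j (b' + j * d)
      = p * f b' d + ∑ d' ∈ Finset.univ.erase d, ∑ x, f x d' := by
    intro b'
    simp only [lineSum]
    rw [Finset.sum_comm, ← Finset.add_sum_erase _ _ (Finset.mem_univ d)]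
    congr 1
    · simp [ZMod.card]
    · refine Finset.sum_congr rfl fun d' hd' => ?_
      rw [← sum_affine (fun x => f x d') b' (sub_ne_zero.2 (Finset.ne_of_mem_erase hd').symm)]
      exact Finset.sum_congr rfl fun j _ => by congr 1; ring
  simp only [backProj, Finset.sum_sub_distrib]
  rw [key, key]
  ring

lemma sum_lineSum (f : ZMod p → ZMod p → ℝ) (j : ZMod p) :
    ∑ a, lineSum f j a = ∑ d, ∑ b, f b d := by
  simp only [lineSum]
  rw [Finset.sum_comm]
  refine Finset.sum_congr rfl fun d _ => ?_
  exact Fintype.sum_equiv (Equiv.subRight (j * d)) _ _ (fun a => by simp)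

lemma lineSum_fibre (f : ZMod p → ZMod p → ℝ) (V : ZMod p → ℝ) (hV : ∑ d, V d = 0)
    (j a : ZMod p) : lineSum (fun b d => f b d + V d) j a = lineSum f j a := by
  simp [lineSum, Finset.sum_add_distrib, hV]

/-- Line values with equal totals over all parallel classes and value `0` on the line `b = -1` are
determined by the values at `a ≠ -1`. -/
lemma eq_of_agree (u u' : ZMod p → ZMod p → ℝ) (T T' : ℝ) (hT : ∀ j, ∑ a, u j a = T)
    (hT' : ∀ j, ∑ a, u' j a = T') (h0 : u 0 (-1) = 0) (h0' : u' 0 (-1) = 0)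
    (h : ∀ j a, a ≠ -1 → u j a = u' j a) : u = u' := by
  have hs : ∀ j, ∑ a ∈ Finset.univ.erase (-1), u j a = ∑ a ∈ Finset.univ.erase (-1), u' j a :=
    fun j => Finset.sum_congr rfl fun a ha => h j a (Finset.ne_of_mem_erase ha)
  have e : ∀ j, u j (-1) + ∑ a ∈ Finset.univ.erase (-1), u j a = T := fun j => by
    rw [Finset.add_sum_erase _ _ (Finset.mem_univ _), hT]
  have e' : ∀ j, u' j (-1) + ∑ a ∈ Finset.univ.erase (-1), u' j a = T' := fun j => by
    rw [Finset.add_sum_erase _ _ (Finset.mem_univ _), hT']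
  funext j a
  by_cases ha : a = -1
  · subst ha
    linarith [hs j, hs 0, e j, e 0, e' j, e' 0]
  · exact h j a ha

lemma cast_inj {x y : ℕ} (hx : x < p) (hy : y < p) (h : (x : ZMod p) = y) : x = y := by
  rw [← ZMod.val_cast_of_lt hx, ← ZMod.val_cast_of_lt hy, h]

lemma cast_add_one_ne (a : Fin (p - 1)) : (a.val : ZMod p) + 1 ≠ 0 := by
  have ha := a.isLt
  intro h
  have h' : ((a.val + 1 : ℕ) : ZMod p) = ((0 : ℕ) : ZMod p) := by push_cast; exact h
  have := cast_inj (by omega) (by omega) h'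
  omega

lemma cast_ne (a : Fin (p - 1)) : (a.val : ZMod p) ≠ -1 := fun h =>
  cast_add_one_ne a (by rw [h]; ring)

lemma exists_cast (a : ZMod p) (ha : a ≠ -1) : ∃ c : Fin (p - 1), (c.val : ZMod p) = a := by
  have h1 : a.val < p := ZMod.val_lt a
  have h2 : a.val ≠ p - 1 := by
    intro h
    apply ha
    rw [← ZMod.natCast_zmod_val a, h, Nat.cast_sub (by omega)]
    simp
  exact ⟨⟨a.val, by omega⟩, ZMod.natCast_zmod_val a⟩

lemma exists_cast' (j : ZMod p) : ∃ c : Fin p, (c.val : ZMod p) = j :=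
  ⟨⟨j.val, ZMod.val_lt j⟩, ZMod.natCast_zmod_val j⟩

lemma ext_zero (w : Fin p × Fin (p - 1) → ℝ) : ext w 0 (-1) = 0 := by
  simp [ext, extCoeff]

lemma sum_extCoeff (j : ZMod p) (r : Fin p × Fin (p - 1)) :
    ∑ a, extCoeff j a r = if (r.1.val : ZMod p) = 0 then 1 else 0 := by
  rw [← Finset.add_sum_erase _ _ (Finset.mem_univ (-1))]
  have : ∑ a ∈ Finset.univ.erase (-1), extCoeff j a r
      = ∑ a ∈ Finset.univ.erase (-1), if (r.2.val : ZMod p) = a then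
          (if (r.1.val : ZMod p) = j then (1 : ℤ) else 0) else 0 := by
    refine Finset.sum_congr rfl fun a ha => ?_
    rw [extCoeff, if_neg (Finset.ne_of_mem_erase ha)]
    by_cases h1 : (r.1.val : ZMod p) = j <;> by_cases h2 : (r.2.val : ZMod p) = a <;> simp [h1, h2]
  rw [this, Finset.sum_ite_eq, if_pos (by simp [cast_ne])]
  simp [extCoeff]

lemma sum_ext (w : Fin p × Fin (p - 1) → ℝ) (j : ZMod p) :
    ∑ a, ext w j a = ∑ r, (if (r.1.val : ZMod p) = 0 then 1 else 0) * w r := by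
  simp only [ext]
  rw [Finset.sum_comm]
  refine Finset.sum_congr rfl fun r _ => ?_
  rw [← Finset.sum_mul, ← Int.cast_sum, sum_extCoeff]
  simp

lemma ext_apply (w : Fin p × Fin (p - 1) → ℝ) (i : Fin p) (c : Fin (p - 1)) :
    ext w (i.val : ZMod p) (c.val : ZMod p) = w (i, c) := by
  rw [ext, Finset.sum_eq_single (i, c)]
  · simp [extCoeff, cast_ne]
  · rintro ⟨i', c'⟩ - hne
    have : ¬ ((i'.val : ZMod p) = i.val ∧ (c'.val : ZMod p) = c.val) := by
      rintro ⟨h1, h2⟩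
      apply hne
      have h3 := c.isLt
      have h4 := c'.isLt
      exact Prod.ext (Fin.ext (cast_inj i'.isLt i.isLt h1))
        (Fin.ext (cast_inj (by omega) (by omega) h2))
    simp only [extCoeff, if_neg (cast_ne c), if_neg this]
    simp
  · simp

lemma sum_kerCoeff (i : Fin (p - 1)) : ∑ d : ZMod p, kerCoeff d i = 0 := by
  rw [← Finset.add_sum_erase _ _ (Finset.mem_univ 0)]
  have : ∑ d ∈ Finset.univ.erase (0 : ZMod p), kerCoeff d i
      = ∑ d ∈ Finset.univ.erase (0 : ZMod p), if d = (i.val : ZMod p) + 1 then (1 : ℤ) else 0 :=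
    Finset.sum_congr rfl fun d hd => by rw [kerCoeff, if_neg (Finset.ne_of_mem_erase hd)]
  rw [this, Finset.sum_ite_eq', if_pos (by simp [cast_add_one_ne])]
  simp [kerCoeff]

lemma sum_ker (v : Fin (p - 1) → ℝ) : ∑ d : ZMod p, ∑ i, (kerCoeff d i : ℝ) * v i = 0 := by
  rw [Finset.sum_comm]
  refine Finset.sum_eq_zero fun i _ => ?_
  rw [← Finset.sum_mul, ← Int.cast_sum, sum_kerCoeff]
  simp

lemma ker_apply (v : Fin (p - 1) → ℝ) (i : Fin (p - 1)) :
    ∑ i', (kerCoeff ((i.val : ZMod p) + 1) i' : ℝ) * v i' = v i := by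
  rw [Finset.sum_eq_single i]
  · simp [kerCoeff, cast_add_one_ne]
  · intro i' _ hne
    have : ¬ ((i.val : ZMod p) + 1 = (i'.val : ZMod p) + 1) := by
      intro h
      have h3 := i.isLt
      have h4 := i'.isLt
      exact hne (Fin.ext (cast_inj (by omega) (by omega) (add_right_cancel h).symm))
    simp only [kerCoeff, if_neg (cast_add_one_ne i), if_neg this]
    simp
  · simp

lemma lineSum_eq (f : ZMod p → ZMod p → ℝ) (j a : ZMod p) :
    lineSum f j a = ∑ bd : ZMod p × ZMod p, if bd.1 + j * bd.2 = a then f bd.1 bd.2 else 0 := by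
  rw [lineSum, Fintype.sum_prod_type_right]
  refine Finset.sum_congr rfl fun d _ => ?_
  rw [Finset.sum_eq_single (a - j * d)]
  · simp
  · intro b _ hb
    rw [if_neg]
    intro h
    exact hb (by rw [← h]; ring)
  · simp

/-- The column set: the points of the affine plane other than `(-1, 0)`. -/
abbrev Pt (p : ℕ) := {bd : ZMod p × ZMod p // bd ≠ ((p : ZMod p) - 1, 0)}

/-- The value given to `f` at the deleted point `(-1, 0)` is irrelevant, since no row of `A` is a
line through it. -/
lemma mulVec_eq (A : Matrix (Fin p × Fin (p - 1)) (Pt p) ℝ)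
    (hA : ∀ (j : Fin p) (a : Fin (p - 1)) (bd : Pt p), A (j, a) bd =
        if bd.1.1 + (j.val : ZMod p) * bd.1.2 = (a.val : ZMod p) then 1 else 0)
    (m : Pt p → ℝ) (f : ZMod p → ZMod p → ℝ) (hf : ∀ bd : Pt p, f bd.1.1 bd.1.2 = m bd)
    (j : Fin p) (a : Fin (p - 1)) :
    A.mulVec m (j, a) = lineSum f (j.val : ZMod p) (a.val : ZMod p) := by
  rw [lineSum_eq, ← Finset.add_sum_erase _ _ (Finset.mem_univ ((p : ZMod p) - 1, (0 : ZMod p))),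
    if_neg (by simpa using (cast_ne a).symm), zero_add,
    Finset.sum_subtype _ (p := fun bd => bd ≠ ((p : ZMod p) - 1, 0)) (by simp)]
  simp only [Matrix.mulVec, dotProduct]
  refine Finset.sum_congr rfl fun bd _ => ?_
  rw [hA, hf]
  simp

/-- The matrix `B` of the back projection of the extended line values. -/
def matB (p : ℕ) [NeZero p] : Matrix (Pt p) (Fin p × Fin (p - 1)) ℤ :=
  fun bd r => ∑ j, (extCoeff j (bd.1.1 + j * bd.1.2) r - extCoeff j (-1 + j * bd.1.2) r)

/-- The matrix `K` of functions depending only on `d`, with total sum zero. -/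
def matK (p : ℕ) [NeZero p] : Matrix (Pt p) (Fin (p - 1)) ℤ := fun bd i => kerCoeff bd.1.2 i

lemma matB_mulVec (w : Fin p × Fin (p - 1) → ℝ) (bd : Pt p) :
    ((matB p).map (fun z : ℤ => (z : ℝ))).mulVec w bd = backProj (ext w) bd.1.1 bd.1.2 := by
  simp only [Matrix.mulVec, dotProduct, Matrix.map_apply, matB, backProj, ext]
  push_cast
  simp only [Finset.sum_mul, ← Finset.sum_sub_distrib, ← sub_mul]
  rw [Finset.sum_comm]

lemma matK_mulVec (v : Fin (p - 1) → ℝ) (bd : Pt p) :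
    ((matK p).map (fun z : ℤ => (z : ℝ))).mulVec v bd
      = ∑ i, (kerCoeff bd.1.2 i : ℝ) * v i := rfl

lemma pt_ne (i : Fin (p - 1)) : ((-1 : ZMod p), (i.val : ZMod p) + 1) ≠ ((p : ZMod p) - 1, 0) :=
  fun h => cast_add_one_ne i (Prod.ext_iff.1 h).2

lemma mulVec_solution [Fact p.Prime] (A : Matrix (Fin p × Fin (p - 1)) (Pt p) ℝ)
    (hA : ∀ (j : Fin p) (a : Fin (p - 1)) (bd : Pt p), A (j, a) bd =
        if bd.1.1 + (j.val : ZMod p) * bd.1.2 = (a.val : ZMod p) then 1 else 0)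
    (w : Fin p × Fin (p - 1) → ℝ) (v : Fin (p - 1) → ℝ) :
    A.mulVec ((p : ℝ)⁻¹ • ((matB p).map (fun z : ℤ => (z : ℝ))).mulVec w +
      ((matK p).map (fun z : ℤ => (z : ℝ))).mulVec v) = w := by
  have hp0 : (p : ℝ) ≠ 0 := Nat.cast_ne_zero.2 (NeZero.ne p)
  funext ⟨j, a⟩
  rw [mulVec_eq A hA _ (fun b d => (p : ℝ)⁻¹ * backProj (ext w) b d
      + ∑ i, (kerCoeff d i : ℝ) * v i)
      (fun bd => by simp [matB_mulVec, matK_mulVec]),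
    lineSum_fibre _ _ (sum_ker v)]
  have := lineSum_backProj (ext w) _ (sum_ext w) (ext_zero w) j.val a.val
  rw [ext_apply] at this
  rw [lineSum] at this ⊢
  rw [← Finset.mul_sum, this]
  field_simp

/-- Every `m` is recovered from its line sums `A m` and its values at the points `(-1, d)`,
`d ≠ 0`. -/
lemma recover [Fact p.Prime] (A : Matrix (Fin p × Fin (p - 1)) (Pt p) ℝ)
    (hA : ∀ (j : Fin p) (a : Fin (p - 1)) (bd : Pt p), A (j, a) bd =
        if bd.1.1 + (j.val : ZMod p) * bd.1.2 = (a.val : ZMod p) then 1 else 0)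
    (m : Pt p → ℝ) (bd : Pt p) :
    ((matB p).map (fun z : ℤ => (z : ℝ))).mulVec (A.mulVec m) bd =
      p * (m bd - ((matK p).map (fun z : ℤ => (z : ℝ))).mulVec
        (fun i => m ⟨(-1, (i.val : ZMod p) + 1), pt_ne i⟩) bd) := by
  set v : Fin (p - 1) → ℝ := fun i => m ⟨(-1, (i.val : ZMod p) + 1), pt_ne i⟩ with hv
  set V : ZMod p → ℝ := fun d => ∑ i, (kerCoeff d i : ℝ) * v i with hVdef
  -- The value `V 0` at the deleted point makes `f (-1) d = V d` hold at `d = 0` as well.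
  let f : ZMod p → ZMod p → ℝ := fun b d =>
    if h : (b, d) ≠ ((p : ZMod p) - 1, 0) then m ⟨(b, d), h⟩ else V 0
  have hf : ∀ bd : Pt p, f bd.1.1 bd.1.2 = m bd := fun bd => dif_pos bd.2
  have hfV : ∀ d, f (-1) d = V d := by
    intro d
    by_cases hd : d = 0
    · subst hd
      simp [f]
    · obtain ⟨i, hi⟩ := exists_cast (d - 1) (fun h => hd (by linear_combination h))
      have hd' : d = (i.val : ZMod p) + 1 := by rw [hi]; ring
      rw [hd', hVdef]
      simp only [ker_apply]
      exact dif_pos (pt_ne i)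
  let g : ZMod p → ZMod p → ℝ := fun b d => f b d + -V d
  have hg : ∀ d, g (-1) d = 0 := fun d => by simp [g, hfV]
  have hLg : lineSum g = lineSum f := by
    funext j a
    exact lineSum_fibre f (fun d => -V d) (by simp [hVdef, sum_ker]) j a
  have hext : ext (A.mulVec m) = lineSum g := by
    refine eq_of_agree _ _ _ _ (sum_ext _) (sum_lineSum g) (ext_zero _) (by simp [lineSum, hg]) ?_
    intro j a ha
    obtain ⟨c, rfl⟩ := exists_cast a ha
    obtain ⟨i, rfl⟩ := exists_cast' j
    rw [ext_apply, mulVec_eq A hA m f hf, hLg]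
  rw [matB_mulVec, hext, backProj_lineSum, hg, matK_mulVec, ← hf bd]
  simp only [g, hVdef]
  ring

end Radon


theorem stmt9 (p : ℕ) (hp : p.Prime) (hp3 : 3 ≤ p) [NeZero p]
    (A : Matrix (Fin p × Fin (p - 1)) {bd : ZMod p × ZMod p // bd ≠ ((p : ZMod p) - 1, 0)} ℝ)
    (hA : ∀ (j : Fin p) (a : Fin (p - 1))
        (bd : {bd : ZMod p × ZMod p // bd ≠ ((p : ZMod p) - 1, 0)}),
      A (j, a) bd =
        if bd.1.1 + (j.val : ZMod p) * bd.1.2 = (a.val : ZMod p) then 1 else 0) :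
    A.rank = p * (p - 1) ∧
    ∃ (B : Matrix {bd : ZMod p × ZMod p // bd ≠ ((p : ZMod p) - 1, 0)}
          (Fin p × Fin (p - 1)) ℤ)
      (K : Matrix {bd : ZMod p × ZMod p // bd ≠ ((p : ZMod p) - 1, 0)} (Fin (p - 1)) ℤ),
      (∀ w : Fin p × Fin (p - 1) → ℝ,
        {m : {bd : ZMod p × ZMod p // bd ≠ ((p : ZMod p) - 1, 0)} → ℝ | A.mulVec m = w} =
          Set.range (fun v : Fin (p - 1) → ℝ =>
            (p : ℝ)⁻¹ • (B.map (fun z : ℤ => (z : ℝ))).mulVec w +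
              (K.map (fun z : ℤ => (z : ℝ))).mulVec v)) ∧
      (∀ w : Fin p × Fin (p - 1) → ℤ,
        (¬ ∀ c, (p : ℤ) ∣ B.mulVec w c) →
        ¬ ∃ m : {bd : ZMod p × ZMod p // bd ≠ ((p : ZMod p) - 1, 0)} → ℤ,
          A.mulVec (fun c => (m c : ℝ)) = fun r => (w r : ℝ)) := by
  have : Fact p.Prime := ⟨hp⟩
  have hp0 : (p : ℝ) ≠ 0 := Nat.cast_ne_zero.2 (NeZero.ne p)
  constructor
  · have hs : Function.Surjective A.mulVecLin := fun w =>
      ⟨_, Radon.mulVec_solution A hA w 0⟩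
    rw [Matrix.rank, LinearMap.range_eq_top.2 hs, finrank_top]
    simp
  refine ⟨Radon.matB p, Radon.matK p, fun w => ?_, fun w hw => ?_⟩
  · ext m
    constructor
    · rintro rfl
      refine ⟨fun i => m ⟨(-1, (i.val : ZMod p) + 1), Radon.pt_ne i⟩, ?_⟩
      funext bd
      have := Radon.recover A hA m bd
      simp only [Pi.add_apply, Pi.smul_apply, smul_eq_mul]
      rw [this, inv_mul_cancel_left₀ hp0, sub_add_cancel]
    · rintro ⟨v, rfl⟩
      exact Radon.mulVec_solution A hA w v
  · rintro ⟨m, hm⟩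
    refine hw fun c => ⟨m c - (Radon.matK p).mulVec
      (fun i => m ⟨(-1, (i.val : ZMod p) + 1), Radon.pt_ne i⟩) c, ?_⟩
    have := Radon.recover A hA (fun c => (m c : ℝ)) c
    rw [hm] at this
    simp only [Matrix.mulVec, dotProduct, Matrix.map_apply] at this ⊢
    exact_mod_cast this
end

section
/- Let q ≥ 3 and C₁ > 0. There exist C > 0 and n₀ such that for all n ≥ n₀ the following holds with N := ⌊C₁·√n⌋. For every tuple w ∈ ℤ^{q−1} with all entries in [−N, N], the number H of x ∈ (ZMod q)ⁿ with W(x) = w satisfies qⁿ/(C·N^{q−1}) ≤ H ≤ C·qⁿ/N^{q−1}. -/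
/-!
Words with a prescribed weight tuple are words with all letter counts `k` prescribed, so their
number `H` is the multinomial coefficient `n! / ∏ b, (k b)!` (`card_words_mul`, `card_Wtuple`).
When the entries of `w` are `O(√n)`, every `k b` is within `O(√n)` of the mean `t = n / q`
(`exists_counts`).

Stirling's formula gives each `(k b)!` up to a constant as `√t (k/e)^k`. The elementary inequality
`1 + x ≤ exp x` shows that `(k/e)^k` is `t^k e^{-t}` times a factor between `1` and
`exp ((k - t)^2 / t)`, which is bounded (`factorial_bounds`). Multiplying over the `q` letters, the
main terms give `√t^q t^n e^{-n}`, and dividing Stirling's main term for `n!` by this leaves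
`√(2 q) q^n / √t^{q-1}`, of the order `q^n / N^{q-1}` (`multinomial_bounds`).
-/

/-- The weight tuple `W(x)`, 0-indexed: `Wtuple q n x a = w_{a+1}(x) − 2⌊n/(2q)⌋`. -/
def Wtuple (q n : ℕ) (y : Fin n → ZMod q) (a : Fin (q - 1)) : ℤ :=
  ((Finset.univ.filter fun i => y i = (((a : ℕ) + 1 : ℕ) : ZMod q)).card : ℤ) -
    2 * ((n / (2 * q) : ℕ) : ℤ)

/-- The words with prescribed letter counts `k` are counted by the multinomial coefficient: the
bijections `Fin n ≃ Σ b, Fin (k b)`, of which there are `n!`, map to such words by taking first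
components, and each fibre is a coset of the stabilizer of a word, of size `∏ b, (k b)!`. -/
lemma card_words_mul {ι : Type*} [Fintype ι] [DecidableEq ι] {n : ℕ} (k : ι → ℕ)
    (hk : ∑ b, k b = n) :
    Nat.card {x : Fin n → ι // ∀ b, Fintype.card {i // x i = b} = k b} * ∏ b, (k b).factorial
      = n.factorial := by
  have htot : Fintype.card (Fin n ≃ Σ b, Fin (k b)) = n.factorial := by
    rw [Fintype.card_equiv (Fintype.equivOfCardEq (by simp [hk])), Fintype.card_fin]
  rw [← htot, Nat.card_eq_fintype_card]
  have key (e : Fin n ≃ Σ b, Fin (k b)) (b : ι) :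
      Fintype.card {i // (e i).1 = b} = k b := by
    rw [Fintype.card_congr (e.subtypeEquivOfSubtype (p := fun s => s.1 = b)),
      Fintype.card_congr (Equiv.sigmaSubtype b), Fintype.card_fin]
  let F : (Fin n ≃ Σ b, Fin (k b)) →
      {x : Fin n → ι // ∀ b, Fintype.card {i // x i = b} = k b} :=
    fun e => ⟨fun i => (e i).1, key e⟩
  rw [← Fintype.card_congr (Equiv.sigmaFiberEquiv F), Fintype.card_sigma]
  have hfib (x : {x : Fin n → ι // ∀ b, Fintype.card {i // x i = b} = k b}) :
      Fintype.card {e // F e = x} = ∏ b, (k b).factorial := by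
    obtain ⟨x, hx⟩ := x
    let e₀ : Fin n ≃ Σ b, Fin (k b) := (Equiv.sigmaFiberEquiv x).symm.trans
      (Equiv.sigmaCongrRight fun b => Fintype.equivFinOfCardEq (hx b))
    have hst := DomMulAct.stabilizer_card x
    simp only [hx] at hst
    rw [← hst]
    refine Fintype.card_congr (Equiv.subtypeEquiv
      (Equiv.equivCongr (Equiv.refl (Fin n)) e₀) fun g => ?_).symm
    simp only [F, Subtype.mk.injEq, funext_iff, Function.comp_apply]
    rfl
  simp [hfib]

lemma stirling_bounds {k : ℕ} (hk : k ≠ 0) :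
    √(2 * k) * (k / Real.exp 1) ^ k ≤ k.factorial ∧
      (k.factorial : ℝ) ≤ 2 * (√(2 * k) * (k / Real.exp 1) ^ k) := by
  have hk' : (0 : ℝ) < k := by positivity
  have hpos : 0 < √(2 * k) * (k / Real.exp 1) ^ k := by positivity
  constructor
  · refine le_trans ?_ (Stirling.le_factorial_stirling k)
    gcongr
    nlinarith [Real.pi_gt_three]
  · rw [← div_le_iff₀ hpos]
    change Stirling.stirlingSeq k ≤ 2
    obtain ⟨j, rfl⟩ := Nat.exists_eq_succ_of_ne_zero hk
    refine (Stirling.stirlingSeq'_antitone (Nat.zero_le j)).trans ?_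
    simp only [Function.comp_apply, Nat.succ_eq_add_one, zero_add, Stirling.stirlingSeq_one]
    rw [div_le_iff₀ (by positivity)]
    have h2 : (1.4 : ℝ) ≤ √2 := Real.le_sqrt_of_sq_le (by norm_num)
    linarith [Real.exp_one_lt_d9]

lemma ratio_pow_le {a b : ℝ} (ha : 0 ≤ a) (hb : 0 < b) (k : ℕ) :
    a ^ k ≤ b ^ k * Real.exp (k * (a / b - 1)) := by
  rw [Real.exp_nat_mul, ← mul_pow]
  gcongr
  have := Real.add_one_le_exp (a / b - 1)
  rw [sub_add_cancel, div_le_iff₀ hb] at this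
  linarith

/-- Stirling bounds for `k!` when `k` is comparable to `t`, with main term `√t t^k e^{-t}`. When
several `k` average to `t`, the product of these main terms depends only on the sum of the `k`. -/
lemma factorial_bounds {t : ℝ} {k : ℕ} (ht : 0 < t) (h1 : t ≤ 2 * k) (h2 : (k : ℝ) ≤ 2 * t) :
    √t * t ^ k * Real.exp (-t) ≤ k.factorial ∧
      (k.factorial : ℝ) ≤ 4 * Real.exp ((k - t) ^ 2 / t) * (√t * t ^ k * Real.exp (-t)) := by
  have hk : (0 : ℝ) < k := by linarith
  have hk0 : k ≠ 0 := by rintro rfl; simp at hk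
  have hke : ((k : ℝ) / Real.exp 1) ^ k = k ^ k * Real.exp (-k) := by
    rw [div_pow, ← Real.exp_nat_mul, mul_one, Real.exp_neg, div_eq_mul_inv]
  obtain ⟨hl, hu⟩ := stirling_bounds hk0
  rw [hke] at hl hu
  constructor
  · refine le_trans ?_ hl
    have h := ratio_pow_le ht.le hk k
    have he : (k : ℝ) * (t / k - 1) = t - k := by field_simp
    rw [he] at h
    calc √t * t ^ k * Real.exp (-t)
        ≤ √(2 * k) * (k ^ k * Real.exp (t - k)) * Real.exp (-t) := by gcongr
      _ = √(2 * k) * (k ^ k * Real.exp (-k)) := by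
        rw [mul_assoc, mul_assoc, ← Real.exp_add]; ring_nf
  · refine hu.trans ?_
    have h := ratio_pow_le hk.le ht k
    have he : (k : ℝ) * (k / t - 1) = (k - t) ^ 2 / t + (k - t) := by field_simp; ring
    rw [he] at h
    have hs : √(2 * k) ≤ 2 * √t := by
      refine Real.sqrt_le_iff.2 ⟨by positivity, ?_⟩
      rw [mul_pow, Real.sq_sqrt ht.le]; linarith
    calc 2 * (√(2 * k) * (k ^ k * Real.exp (-k)))
        ≤ 2 * ((2 * √t) * ((t ^ k * Real.exp ((k - t) ^ 2 / t + (k - t))) * Real.exp (-k))) := by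
          gcongr
      _ = _ := by
        have : Real.exp ((k - t) ^ 2 / t + (k - t)) * Real.exp (-k)
            = Real.exp ((k - t) ^ 2 / t) * Real.exp (-t) := by
          rw [← Real.exp_add, ← Real.exp_add]; ring_nf
        rw [mul_assoc (t ^ k), this]; ring

/-- The multinomial coefficient `H` with `p + 1` parts within `D √n` of the mean `n / (p + 1)` has
order `(p + 1) ^ n / √n ^ p`, with explicit constants. -/
lemma multinomial_bounds {p n : ℕ} {D H : ℝ} (hn : 0 < n)
    (hnD : 2 * (p + 1) * D ≤ √n) (k : Fin (p + 1) → ℕ) (hk : ∑ b, k b = n)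
    (hdev : ∀ b, |(k b : ℝ) - n / (p + 1)| ≤ D * √n)
    (hH : H * ∏ b, ((k b).factorial : ℝ) = n.factorial) :
    H * √(n / (p + 1)) ^ p ≤ 2 * √(2 * (p + 1)) * (p + 1) ^ n ∧
      (p + 1 : ℝ) ^ n ≤ (4 * Real.exp ((p + 1) * D ^ 2)) ^ (p + 1) * √(n / (p + 1)) ^ p * H := by
  have hn' : (0 : ℝ) < n := by positivity
  obtain ⟨t, ht⟩ : ∃ t : ℝ, t = n / (p + 1) := ⟨_, rfl⟩
  simp only [← ht] at hdev ⊢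
  have htpos : 0 < t := by rw [ht]; positivity
  have hnt : (n : ℝ) = (p + 1) * t := by rw [ht]; field_simp
  have hsn : √(n : ℝ) * √n = n := Real.mul_self_sqrt hn'.le
  -- `D √n ≤ t / 2`, so every part lies in `[t / 2, 2 t]`.
  have hDt : 2 * (D * √n) ≤ t := by
    have : (p + 1 : ℝ) * (2 * (D * √n)) ≤ (p + 1) * t := by
      rw [← hnt]; nlinarith [Real.sqrt_nonneg (n : ℝ)]
    exact le_of_mul_le_mul_left this (by positivity)
  have hfac (b) := factorial_bounds (k := k b) htpos
    (by linarith [(abs_le.1 (hdev b)).1]) (by linarith [(abs_le.1 (hdev b)).2])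
  set E := 4 * Real.exp ((p + 1) * D ^ 2) with hE
  have hexp (b) : 4 * Real.exp (((k b : ℝ) - t) ^ 2 / t) ≤ E := by
    rw [hE]
    gcongr
    rw [div_le_iff₀ htpos]
    calc ((k b : ℝ) - t) ^ 2 = |(k b : ℝ) - t| ^ 2 := (sq_abs _).symm
      _ ≤ (D * √n) ^ 2 := by gcongr; exact hdev b
      _ = (p + 1) * D ^ 2 * t := by rw [mul_pow, Real.sq_sqrt hn'.le, hnt]; ring
  set P : ℝ := √t ^ (p + 1) * t ^ n * Real.exp (-n) with hP
  have hPpos : 0 < P := by positivity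
  have hprod : ∏ b, (√t * t ^ k b * Real.exp (-t)) = P := by
    rw [Finset.prod_mul_distrib, Finset.prod_mul_distrib, Finset.prod_pow_eq_pow_sum, hk]
    simp only [Finset.prod_const, Finset.card_univ, Fintype.card_fin]
    rw [← Real.exp_nat_mul, hP, hnt]
    push_cast
    ring_nf
  have hlow : P ≤ ∏ b, ((k b).factorial : ℝ) := by
    rw [← hprod]
    exact Finset.prod_le_prod (fun b _ => by positivity) fun b _ => (hfac b).1
  have hupp : ∏ b, ((k b).factorial : ℝ) ≤ E ^ (p + 1) * P := by
    calc ∏ b, ((k b).factorial : ℝ) ≤ ∏ b, (E * (√t * t ^ k b * Real.exp (-t))) := by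
          refine Finset.prod_le_prod (fun b _ => by positivity) fun b _ => (hfac b).2.trans ?_
          gcongr
          exact hexp b
      _ = E ^ (p + 1) * P := by rw [Finset.prod_mul_distrib, hprod]; simp
  have hHpos : 0 < H := by
    have h1 : 0 < ∏ b, ((k b).factorial : ℝ) := by positivity
    have h2 : (0 : ℝ) < n.factorial := by positivity
    rw [← hH] at h2
    exact pos_of_mul_pos_left h2 h1.le
  obtain ⟨hnl, hnu⟩ := stirling_bounds hn.ne'
  -- The Stirling main term of `n!`, in terms of `P`.
  obtain ⟨Q, hQ, hQpos⟩ : ∃ Q : ℝ, Q = √t * t ^ n * Real.exp (-n) ∧ 0 < Q :=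
    ⟨_, rfl, by positivity⟩
  have hmain : √(2 * n) * (n / Real.exp 1) ^ n = √(2 * (p + 1)) * (p + 1) ^ n * Q := by
    rw [div_pow, ← Real.exp_nat_mul, mul_one, div_eq_mul_inv, ← Real.exp_neg, hQ]
    have h1 : √(2 * n) = √(2 * (p + 1)) * √t := by
      rw [← Real.sqrt_mul (by positivity), hnt]; ring_nf
    have h2 : (n : ℝ) ^ n = (p + 1) ^ n * t ^ n := by rw [← mul_pow, ← hnt]
    rw [h1, h2]; ring
  have hPQ : P = √t ^ p * Q := by rw [hP, hQ]; ring
  rw [hmain] at hnl hnu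
  rw [← hH] at hnl hnu
  constructor
  · refine le_of_mul_le_mul_right ?_ hQpos
    calc H * √t ^ p * Q = H * P := by rw [hPQ]; ring
      _ ≤ H * ∏ b, ((k b).factorial : ℝ) := by gcongr
      _ ≤ _ := hnu
      _ = _ := by ring
  · refine le_of_mul_le_mul_right ?_ hQpos
    have h1 : (1 : ℝ) ≤ √(2 * (p + 1)) := Real.one_le_sqrt.2 (by
      have : (0 : ℝ) ≤ p := by positivity
      linarith)
    calc (p + 1 : ℝ) ^ n * Q ≤ √(2 * (p + 1)) * ((p + 1 : ℝ) ^ n * Q) :=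
          le_mul_of_one_le_left (by positivity) h1
      _ = √(2 * (p + 1)) * (p + 1 : ℝ) ^ n * Q := by ring
      _ ≤ H * ∏ b, ((k b).factorial : ℝ) := hnl
      _ ≤ H * (E ^ (p + 1) * P) := by gcongr
      _ = _ := by rw [hPQ]; ring

/-- Prescribing the weight tuple amounts to prescribing all `p + 1` letter counts, since the count
of the letter `0` is what remains of `n`. -/
lemma card_Wtuple (p n : ℕ) (w : Fin p → ℤ) (k : Fin (p + 1) → ℕ) (hk : ∑ b, k b = n)
    (hkw : ∀ a : Fin p, (k a.succ : ℤ) = w a + 2 * ((n / (2 * (p + 1)) : ℕ) : ℤ)) :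
    Nat.card {x : Fin n → ZMod (p + 1) // Wtuple (p + 1) n x = w} =
      Nat.card {x : Fin n → Fin (p + 1) // ∀ b, Fintype.card {i // x i = b} = k b} := by
  suffices h : ∀ x : Fin n → Fin (p + 1),
      Wtuple (p + 1) n x = w ↔ ∀ b, Fintype.card {i // x i = b} = k b from
    Nat.card_congr (Equiv.subtypeEquiv (Equiv.refl _) h)
  intro x
  have hW (a : Fin p) : Wtuple (p + 1) n x a =
      (Fintype.card {i // x i = a.succ} : ℤ) - 2 * ((n / (2 * (p + 1)) : ℕ) : ℤ) := by
    have hcast : @Eq (Fin (p + 1)) (((a : ℕ) + 1 : ℕ) : ZMod (p + 1)) a.succ := by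
      refine Fin.ext ?_
      change ZMod.val (((a : ℕ) + 1 : ℕ) : ZMod (p + 1)) = a.succ.val
      rw [ZMod.val_natCast, Fin.val_succ, Nat.mod_eq_of_lt (by omega)]
    rw [Fintype.card_subtype, ← hcast]
    rfl
  have hsum : ∑ b, Fintype.card {i // x i = b} = n := by
    rw [← Fintype.card_sigma, Fintype.card_congr (Equiv.sigmaFiberEquiv _), Fintype.card_fin]
  constructor
  · intro h
    have hs (a : Fin p) :
        Fintype.card {i // x i = a.succ} = k a.succ := by
      have h1 := hW a
      rw [h] at h1
      have h2 := hkw a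
      omega
    intro b
    refine Fin.cases ?_ hs b
    have h0 := hsum.trans hk.symm
    rw [Fin.sum_univ_succ, Fin.sum_univ_succ, Finset.sum_congr rfl fun a _ => hs a] at h0
    exact Nat.add_right_cancel h0
  · intro h
    funext a
    rw [hW a, h a.succ, hkw a]
    ring

/-- The letter counts determined by a tuple `w` with `|w a| ≤ B √n` for all `a` are natural
numbers within `(p + 1) (B + 2) √n` of the mean, once `n` is large. -/
lemma exists_counts {p n : ℕ} {B : ℝ} (hB : 0 < B) (hn : 0 < n)
    (hnB : 2 * (p + 1) * ((p + 1) * (B + 2)) ≤ √n) (w : Fin p → ℤ)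
    (hw : ∀ a, |(w a : ℝ)| ≤ B * √n) :
    ∃ k : Fin (p + 1) → ℕ, ∑ b, k b = n ∧
      (∀ a : Fin p, (k a.succ : ℤ) = w a + 2 * ((n / (2 * (p + 1)) : ℕ) : ℤ)) ∧
      ∀ b, |(k b : ℝ) - n / (p + 1)| ≤ (p + 1) * (B + 2) * √n := by
  set m : ℕ := n / (2 * (p + 1)) with hm
  have hs1 : 1 ≤ √(n : ℝ) := Real.one_le_sqrt.2 (by exact_mod_cast hn)
  have hp : (0 : ℝ) ≤ p := by positivity
  let c : Fin p → ℤ := fun a => w a + 2 * (m : ℤ)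
  let K : Fin (p + 1) → ℤ := Fin.cons (n - ∑ a, c a) c
  have hKsum : ∑ b, K b = n := by simp [K, Fin.sum_univ_succ]
  have hm2 : |2 * (m : ℝ) - n / (p + 1)| ≤ 2 := by
    have hdm := Nat.div_add_mod n (2 * (p + 1))
    have hlt := Nat.mod_lt n (show 2 * (p + 1) > 0 by positivity)
    rw [← hm] at hdm
    have h1 : (2 * (p + 1)) * m ≤ n := by omega
    have h2 : n ≤ (2 * (p + 1)) * m + 2 * (p + 1) := by omega
    have h1' : (2 * ((p : ℝ) + 1)) * m ≤ n := by exact_mod_cast h1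
    have h2' : (n : ℝ) ≤ (2 * ((p : ℝ) + 1)) * m + 2 * (p + 1) := by exact_mod_cast h2
    have h3 : 2 * (m : ℝ) ≤ n / (p + 1) := by rw [le_div_iff₀ (by positivity)]; linarith
    have h4 : (n : ℝ) / (p + 1) ≤ 2 * m + 2 := by rw [div_le_iff₀ (by positivity)]; linarith
    rw [abs_le]; constructor <;> linarith
  have hc (a) : |(c a : ℝ) - n / (p + 1)| ≤ (B + 2) * √n := by
    have : (c a : ℝ) - n / (p + 1) = w a + (2 * (m : ℝ) - n / (p + 1)) := by
      simp only [c]; push_cast; ring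
    rw [this]
    refine (abs_add_le _ _).trans ?_
    linarith [hw a]
  have hK (b) : |(K b : ℝ) - n / (p + 1)| ≤ (p + 1) * (B + 2) * √n := by
    have hpos : 0 ≤ (B + 2) * √(n : ℝ) := by positivity
    refine Fin.cases ?_ (fun a => ?_) b
    · have : (K 0 : ℝ) - n / (p + 1) = - ∑ a, ((c a : ℝ) - n / (p + 1)) := by
        simp only [K, Fin.cons_zero, Finset.sum_sub_distrib, Finset.sum_const, Finset.card_univ,
          Fintype.card_fin, nsmul_eq_mul]
        push_cast
        field_simp
        ring
      rw [this, abs_neg]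
      refine (Finset.abs_sum_le_sum_abs _ _).trans ?_
      refine (Finset.sum_le_sum fun a _ => hc a).trans ?_
      simp only [Finset.sum_const, Finset.card_univ, Fintype.card_fin, nsmul_eq_mul]
      nlinarith
    · simp only [K, Fin.cons_succ]
      refine (hc a).trans ?_
      nlinarith [mul_nonneg hp hpos]
  -- The deviation bound is at most half the mean, so the counts are nonnegative.
  have hKnn (b) : 0 ≤ K b := by
    have h1 : (p + 1) * (B + 2) * √n ≤ (n : ℝ) / (p + 1) := by
      rw [le_div_iff₀ (by positivity)]
      have := mul_le_mul_of_nonneg_right hnB (Real.sqrt_nonneg (n : ℝ))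
      rw [Real.mul_self_sqrt (by positivity)] at this
      have h0 : 0 ≤ (p + 1) * (B + 2) * √n * (p + 1) := by positivity
      linarith
    have : (0 : ℝ) ≤ K b := by linarith [(abs_le.1 (hK b)).1]
    exact_mod_cast this
  have hcast (b) : ((K b).toNat : ℤ) = K b := Int.toNat_of_nonneg (hKnn b)
  refine ⟨fun b => (K b).toNat, ?_, fun a => ?_, fun b => ?_⟩
  · zify
    simp only [hcast, hKsum]
  · rw [hcast]; simp [K, c]
  · have : (((K b).toNat : ℕ) : ℝ) = K b := by exact_mod_cast congrArg (Int.cast (R := ℝ)) (hcast b)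
    rw [this]; exact hK b

theorem stmt13 (q : ℕ) (hq : 3 ≤ q) (C₁ : ℝ) (hC₁ : 0 < C₁) :
    ∃ (C : ℝ) (n₀ : ℕ), 0 < C ∧
      ∀ n : ℕ, n₀ ≤ n →
        ∀ w : Fin (q - 1) → ℤ,
          (∀ a, |w a| ≤ ⌊C₁ * Real.sqrt n⌋) →
          (q : ℝ) ^ n / (C * ((⌊C₁ * Real.sqrt n⌋ : ℤ) : ℝ) ^ (q - 1)) ≤
            (Nat.card {x : Fin n → ZMod q // Wtuple q n x = w} : ℝ) ∧
          (Nat.card {x : Fin n → ZMod q // Wtuple q n x = w} : ℝ) ≤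
            C * (q : ℝ) ^ n / ((⌊C₁ * Real.sqrt n⌋ : ℤ) : ℝ) ^ (q - 1) := by
  obtain ⟨p, rfl⟩ : ∃ p, q = p + 1 := ⟨q - 1, by omega⟩
  set D : ℝ := (p + 1) * (C₁ + 2) with hD
  set E : ℝ := 4 * Real.exp ((p + 1) * D ^ 2) with hE
  -- `N = ⌊C₁ √n⌋` lies between `c √t / 2` and `c √t`, where `t` is the mean `n / (p + 1)`.
  obtain ⟨c, hc, hcpos⟩ : ∃ c : ℝ, c = C₁ * √(p + 1) ∧ 0 < c := ⟨_, rfl, by positivity⟩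
  set X : ℝ := 2 * (p + 1) * D + 2 / C₁ with hX
  have hX1 : 2 * (p + 1) * D ≤ X := by rw [hX]; linarith [show 0 < 2 / C₁ by positivity]
  have hX2 : 2 / C₁ ≤ X := by rw [hX]; linarith [show 0 < 2 * (p + 1) * D by positivity]
  set U : ℝ := c ^ p * (2 * √(2 * (p + 1))) with hU
  set L : ℝ := E ^ (p + 1) * (2 / c) ^ p with hL
  have hUpos : 0 < U := by positivity
  have hLpos : 0 < L := by positivity
  refine ⟨U + L, ⌈X ^ 2⌉₊ + 1, by positivity, fun n hn w hw => ?_⟩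
  change Fin p → ℤ at w
  have hn0 : 0 < n := by omega
  have hXn : X ≤ √n := by
    refine Real.le_sqrt_of_sq_le ((Nat.le_ceil _).trans ?_)
    exact_mod_cast (show ⌈X ^ 2⌉₊ ≤ n by omega)
  obtain ⟨N, hN⟩ : ∃ N : ℝ, N = ((⌊C₁ * √n⌋ : ℤ) : ℝ) := ⟨_, rfl⟩
  have hw' (a : Fin p) : |(w a : ℝ)| ≤ C₁ * √n := by
    have : ((|w a| : ℤ) : ℝ) ≤ C₁ * √n := Int.le_floor.1 (hw a)
    simpa using this
  have hcn : 2 ≤ C₁ * √n := by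
    have := hX2.trans hXn
    rw [div_le_iff₀ hC₁] at this
    linarith
  obtain ⟨s, hs⟩ : ∃ s : ℝ, s = √((n : ℝ) / (p + 1)) := ⟨_, rfl⟩
  have hspos : 0 < s := by rw [hs]; positivity
  have hcs : c * s = C₁ * √n := by
    rw [hc, hs, mul_assoc, ← Real.sqrt_mul (by positivity)]
    congr 2
    field_simp
  have hNu : N ≤ c * s := by rw [hN, hcs]; exact Int.floor_le _
  have hNl : c * s ≤ 2 * N := by
    rw [hcs]; have := Int.lt_floor_add_one (C₁ * √n); rw [← hN] at this; linarith
  have hNpos : 0 < N := by nlinarith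
  have hsN : s ≤ 2 / c * N := by
    rw [div_mul_eq_mul_div, le_div_iff₀ hcpos]; linarith
  obtain ⟨k, hk, hkw, hdev⟩ := exists_counts hC₁ hn0 (hX1.trans hXn) w hw'
  have hcard := card_words_mul k hk
  rw [← card_Wtuple p n w k hk hkw] at hcard
  obtain ⟨H, hH⟩ : ∃ H : ℝ,
      H = (Nat.card {x : Fin n → ZMod (p + 1) // Wtuple (p + 1) n x = w} : ℝ) := ⟨_, rfl⟩
  have hHk : H * ∏ b, ((k b).factorial : ℝ) = n.factorial := by
    rw [hH]; exact_mod_cast hcard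
  have hH0 : 0 ≤ H := by rw [hH]; positivity
  obtain ⟨hu, hl⟩ := multinomial_bounds hn0 (hX1.trans hXn) k hk hdev hHk
  rw [← hs] at hu hl
  rw [← hE] at hl
  rw [← hH, ← hN, Nat.add_sub_cancel]
  push_cast
  constructor
  · rw [div_le_iff₀ (by positivity)]
    calc (p + 1 : ℝ) ^ n ≤ E ^ (p + 1) * s ^ p * H := hl
      _ ≤ E ^ (p + 1) * (2 / c * N) ^ p * H := by gcongr
      _ = H * (L * N ^ p) := by rw [hL, mul_pow]; ring
      _ ≤ H * ((U + L) * N ^ p) := by gcongr; linarith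
  · rw [le_div_iff₀ (by positivity)]
    calc H * N ^ p ≤ H * (c * s) ^ p := by gcongr
      _ = c ^ p * (H * s ^ p) := by rw [mul_pow]; ring
      _ ≤ c ^ p * (2 * √(2 * (p + 1)) * (p + 1) ^ n) := by gcongr
      _ = U * (p + 1) ^ n := by rw [hU]; ring
      _ ≤ (U + L) * (p + 1) ^ n := by gcongr; linarith
end

section
/- Let q ≥ 3 and N ≥ 1. For x⁽¹⁾, …, x⁽ᑫ⁾ ∈ (ZMod N)^{q−1}, extend each tuple by x₀⁽ʲ⁾ := −Σ_{a=1}^{q−1} x_a⁽ʲ⁾, interpret superscripts j modulo q (identifying {1,…,q} with residues mod q) and subscripts modulo q (in {0,…,q−1}), and define for j ∈ {1,…,q} and a ∈ {1,…,q−1}: w_a⁽ʲ⁾ := Σ_{t=1}^{q−1} Σ_{s=0}^{t−1} x_{(a−s) mod q}⁽ʲ⁻ᵗ⁾ ∈ ZMod N. Then the arrangement (w⁽¹⁾, …, w⁽ᑫ⁾) is feasible: for every j = 3, …, q, w₁⁽ʲ⁾ = Σ_{a=1}^{q−1} w_a⁽ʲ⁻²⁾ − Σ_{a=2}^{q−1}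 w_a⁽ʲ⁻¹⁾, and for every a = 2, …, q−1, w_a⁽ʲ⁾ = −w_{a−1}⁽ʲ⁻²⁾ + w_{a−1}⁽ʲ⁻¹⁾ + w_a⁽ʲ⁻¹⁾ (equations in ZMod N). -/
/-!
Extend everything to a doubly `q`-periodic array `X j b` (`j b : ZMod q`) whose rows
`∑ b, X j b` vanish, and put `W j b = ∑_{t<q} ∑_{s<t} X (j-t) (b-s)`; the tuple entries produced by
`Lmap` are the values `W j b` with `b ≠ 0`.

Since the inner sum with `t = q` is a full row sum, hence zero, a shift of `t` shows that
`W j b - W (j-1) b = ∑_{t<q} X (j-1-t) (b-t)` is a sum of `X` over a full diagonal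
(`cyc_sub`). This is unchanged under `(j, b) ↦ (j-1, b-1)`, which is the four-term relation
`W j b - W (j-1) b = W (j-1) (b-1) - W (j-2) (b-1)` (`cyc_rec`), valid for every `b`. For `b ≥ 2` it
is the second family of feasibility equations; for `b = 1` it involves the entries `W _ 0`, which are
eliminated using `∑ b, W j b = 0` (`cyc_sum`), giving the first family.
-/

/-- Feasibility of an arrangement (0-indexed: `w j a` is the paper's `w_{a+1}⁽ʲ⁺¹⁾`). -/
def Feasible (q : ℕ) {M : Type*} [AddCommGroup M] (w : Fin q → Fin (q - 1) → M) : Prop :=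
  ∀ (j : ℕ) (hj : j + 2 < q),
    (w ⟨j + 2, hj⟩ ⟨0, by omega⟩ =
      (∑ a : Fin (q - 1), w ⟨j, by omega⟩ a) -
        ∑ a ∈ Finset.univ.filter (fun a : Fin (q - 1) => 1 ≤ (a : ℕ)),
          w ⟨j + 1, by omega⟩ a) ∧
    ∀ (a : ℕ) (ha : a + 1 < q - 1),
      w ⟨j + 2, hj⟩ ⟨a + 1, ha⟩ =
        - w ⟨j, by omega⟩ ⟨a, by omega⟩ + w ⟨j + 1, by omega⟩ ⟨a, by omega⟩ +
          w ⟨j + 1, by omega⟩ ⟨a + 1, ha⟩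

/-- Extend a tuple `x = (x₁, …, x_{q−1})` by `x₀ := −Σ_{a=1}^{q−1} x_a`; the argument
`b : ℕ` is interpreted as the subscript `b mod q ∈ {0, …, q−1}`. -/
def extTuple (q : ℕ) {N : ℕ} (x : Fin (q - 1) → ZMod N) (b : ℕ) : ZMod N :=
  if b % q = 0 then -∑ a, x a
  else if h : b % q - 1 < q - 1 then x ⟨b % q - 1, h⟩ else 0

/-- `Lmap q N x j a` is the paper's `w_{a+1}⁽ʲ⁺¹⁾ = Σ_{t=1}^{q−1} Σ_{s=0}^{t−1}
x_{(a+1−s) mod q}⁽ʲ⁺¹⁻ᵗ⁾`, superscripts interpreted modulo `q`. -/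
def Lmap (q N : ℕ) (x : Fin q → Fin (q - 1) → ZMod N)
    (j : Fin q) (a : Fin (q - 1)) : ZMod N :=
  ∑ t ∈ Finset.Icc 1 (q - 1), ∑ s ∈ Finset.range t,
    extTuple q (x ⟨((j : ℕ) + q - t) % q, Nat.mod_lt _ j.pos⟩) ((a : ℕ) + 1 + q - s)

/-- The array `W j b = ∑_{t<q} ∑_{s<t} X (j-t) (b-s)`, with both indices in `ZMod q`. The term
`t = 0` is empty, so this agrees with summation over `1 ≤ t ≤ q-1`. -/
def cyc {q : ℕ} {M : Type*} [AddCommGroup M] (X : ZMod q → ZMod q → M) (j b : ZMod q) : M :=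
  ∑ t ∈ Finset.range q, ∑ s ∈ Finset.range t, X (j - t) (b - s)

lemma sum_range_zmod {q : ℕ} [NeZero q] {M : Type*} [AddCommGroup M] (f : ZMod q → M) :
    ∑ i ∈ Finset.range q, f (i : ZMod q) = ∑ z, f z := by
  refine Finset.sum_bij' (fun i _ => (i : ZMod q)) (fun z _ => z.val) ?_ ?_ ?_ ?_ ?_
  · simp
  · intro z _
    simpa using ZMod.val_lt z
  · intro i hi
    exact ZMod.val_cast_of_lt (Finset.mem_range.1 hi)
  · intro z _
    simp
  · simp

lemma sum_range_sub {q : ℕ} [NeZero q] {M : Type*} [AddCommGroup M] (f : ZMod q → M)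
    (b : ZMod q) : ∑ s ∈ Finset.range q, f (b - s) = ∑ z, f z := by
  rw [sum_range_zmod (fun z => f (b - z))]
  exact (Equiv.subLeft b).sum_comp f

lemma cyc_sub {q : ℕ} [NeZero q] {M : Type*} [AddCommGroup M] (X : ZMod q → ZMod q → M)
    (hX : ∀ j, ∑ b, X j b = 0) (j b : ZMod q) :
    cyc X j b - cyc X (j - 1) b = ∑ z : ZMod q, X (j - 1 - z) (b - z) := by
  -- The additional term `t = q` is a full row sum, so it may be included for free.
  have h : cyc X j b =
      ∑ t ∈ Finset.range (q + 1), ∑ s ∈ Finset.range t, X (j - t) (b - s) := by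
    rw [Finset.sum_range_succ, sum_range_sub (fun z => X (j - (q : ℕ)) z), hX, add_zero, cyc]
  rw [h, Finset.sum_range_succ', cyc, ← sum_range_zmod (fun z => X (j - 1 - z) (b - z))]
  simp only [Finset.range_zero, Finset.sum_empty, add_zero]
  rw [← Finset.sum_sub_distrib]
  refine Finset.sum_congr rfl fun t _ => ?_
  have e : j - ((t + 1 : ℕ) : ZMod q) = j - 1 - t := by push_cast; ring
  rw [e, Finset.sum_range_succ, add_sub_cancel_left]

lemma cyc_rec {q : ℕ} [NeZero q] {M : Type*} [AddCommGroup M] (X : ZMod q → ZMod q → M)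
    (hX : ∀ j, ∑ b, X j b = 0) (j b : ZMod q) :
    cyc X (j + 2) (b + 1) = - cyc X j b + cyc X (j + 1) b + cyc X (j + 1) (b + 1) := by
  have h1 := cyc_sub X hX (j + 2) (b + 1)
  have h2 := cyc_sub X hX (j + 1) b
  have e : (∑ z : ZMod q, X (j + 2 - 1 - z) (b + 1 - z)) =
      ∑ z : ZMod q, X (j + 1 - 1 - z) (b - z) := by
    rw [← Equiv.sum_comp (Equiv.addRight (1 : ZMod q)) (fun z => X (j + 2 - 1 - z) (b + 1 - z))]
    refine Finset.sum_congr rfl fun z _ => ?_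
    simp only [Equiv.coe_addRight]
    congr 1 <;> ring
  have e1 : j + 2 - 1 = j + 1 := by ring
  have e2 : j + 1 - 1 = j := by ring
  rw [e, ← h2, e1, e2] at h1
  rw [sub_eq_iff_eq_add.1 h1]
  abel

lemma cyc_sum {q : ℕ} [NeZero q] {M : Type*} [AddCommGroup M] (X : ZMod q → ZMod q → M)
    (hX : ∀ j, ∑ b, X j b = 0) (j : ZMod q) : ∑ b, cyc X j b = 0 := by
  unfold cyc
  rw [Finset.sum_comm]
  refine Finset.sum_eq_zero fun t _ => ?_
  rw [Finset.sum_comm]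
  refine Finset.sum_eq_zero fun s _ => ?_
  rw [← hX (j - t)]
  exact (Equiv.subRight (s : ZMod q)).sum_comp (X (j - t))

/-- The arrangement `x`, each tuple extended by its entry with subscript `0`, as an array with both
indices in `ZMod q`. -/
def extArr {q N : ℕ} [NeZero q] (x : Fin q → Fin (q - 1) → ZMod N) (j b : ZMod q) : ZMod N :=
  extTuple q (x ⟨j.val, ZMod.val_lt j⟩) b.val

/-- Splitting a sum over `ZMod q` into the subscript `0` and the subscripts `1, …, q-1`. -/
lemma sum_zmod_split {q : ℕ} [NeZero q] {M : Type*} [AddCommGroup M] (f : ZMod q → M) :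
    ∑ z, f z = f 0 + ∑ a : Fin (q - 1), f (((a : ℕ) : ZMod q) + 1) := by
  obtain ⟨n, rfl⟩ := Nat.exists_eq_succ_of_ne_zero (NeZero.ne q)
  rw [← sum_range_zmod, Finset.sum_range_succ', add_comm, Finset.sum_range]
  simp

lemma extArr_sum {q N : ℕ} [NeZero q] (x : Fin q → Fin (q - 1) → ZMod N) (j : ZMod q) :
    ∑ b, extArr x j b = 0 := by
  rw [sum_zmod_split]
  have h : ∀ a : Fin (q - 1), extArr x j (((a : ℕ) : ZMod q) + 1) =
      x ⟨j.val, ZMod.val_lt j⟩ a := by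
    intro a
    have ha := a.2
    have hv : (((a : ℕ) : ZMod q) + 1).val = a + 1 := by
      rw [← Nat.cast_succ]
      exact ZMod.val_cast_of_lt (by omega)
    have hm : ((a : ℕ) + 1) % q = a + 1 := Nat.mod_eq_of_lt (by omega)
    simp [extArr, extTuple, hv, hm]
  simp only [h]
  simp [extArr, extTuple]

lemma Lmap_eq_cyc {q N : ℕ} [NeZero q] (x : Fin q → Fin (q - 1) → ZMod N)
    (j : Fin q) (a : Fin (q - 1)) :
    Lmap q N x j a = cyc (extArr x) ((j : ℕ) : ZMod q) (((a : ℕ) : ZMod q) + 1) := by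
  have hq : q ≠ 0 := NeZero.ne q
  have hI : Finset.range q = insert 0 (Finset.Icc 1 (q - 1)) := by
    ext t
    simp only [Finset.mem_range, Finset.mem_insert, Finset.mem_Icc]
    omega
  rw [Lmap, cyc, hI, Finset.sum_insert (by simp), Finset.range_zero, Finset.sum_empty, zero_add]
  refine Finset.sum_congr rfl fun t ht => Finset.sum_congr rfl fun s hs => ?_
  rw [Finset.mem_Icc] at ht
  rw [Finset.mem_range] at hs
  have e1 : (((j : ℕ) : ZMod q) - t).val = ((j : ℕ) + q - t) % q := by
    rw [← ZMod.val_natCast, Nat.cast_sub (by omega)]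
    simp
  have e2 : (((a : ℕ) : ZMod q) + 1 - s).val = ((a : ℕ) + 1 + q - s) % q := by
    rw [← ZMod.val_natCast, Nat.cast_sub (by omega)]
    simp
  simp only [extArr, e1, e2, extTuple, Nat.mod_mod]

theorem stmt14 (q N : ℕ) (hq : 3 ≤ q) (hN : 1 ≤ N)
    (x : Fin q → Fin (q - 1) → ZMod N) :
    Feasible q (Lmap q N x) := by
  have : NeZero q := ⟨by omega⟩
  have hX := extArr_sum x
  intro j hj
  simp only [Lmap_eq_cyc]
  push_cast
  refine ⟨?_, fun a ha => cyc_rec _ hX _ _⟩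
  have h0 := cyc_sum _ hX (j : ZMod q)
  have h1 := cyc_sum _ hX ((j : ZMod q) + 1)
  rw [sum_zmod_split] at h0 h1
  have hf : Finset.univ.filter (fun a : Fin (q - 1) => 1 ≤ (a : ℕ)) =
      Finset.univ.erase ⟨0, by omega⟩ := by
    ext a
    simp [Fin.ext_iff, Nat.one_le_iff_ne_zero]
  have h2 := Finset.add_sum_erase Finset.univ
    (fun a : Fin (q - 1) => cyc (extArr x) ((j : ZMod q) + 1) (((a : ℕ) : ZMod q) + 1))
    (Finset.mem_univ ⟨0, by omega⟩)
  have h3 := cyc_rec _ hX (j : ZMod q) 0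
  simp only [Nat.cast_zero] at h2
  rw [hf, h3]
  rw [← h2] at h1
  linear_combination h1 - h0
end

section
/- Let q ≥ 3 and N ≥ 1. For x⁽¹⁾, …, x⁽ᑫ⁾ ∈ (ZMod N)^{q−1}, write L(x⁽¹⁾, …, x⁽ᑫ⁾) := (w⁽¹⁾, …, w⁽ᑫ⁾) where x₀⁽ʲ⁾ := −Σ_{a=1}^{q−1} x_a⁽ʲ⁾ and w_a⁽ʲ⁾ := Σ_{t=1}^{q−1} Σ_{s=0}^{t−1} x_{(a−s) mod q}⁽ʲ⁻ᵗ⁾ (superscripts modulo q identifying {1,…,q} with residues mod q, subscripts modulo q in {0,…,q−1}). Then: (i) for every feasible arrangement (w⁽¹⁾, …, w⁽ᑫ⁾) ∈ ((ZMod N)^{q−1})^q, the number of tuples (x⁽¹⁾, …, x⁽ᑫ⁾) ∈ ((ZMod N)^{q−1})^q with L(x⁽¹⁾, …, x⁽ᑫ⁾) = (w⁽¹⁾, …, w⁽ᑫ⁾) is exactly N^{(q−1)(q−2)}; (ii) any two distinct such tuples (for the same feasible arrangement) differ in at least two of the q components x⁽ʲ⁾. -/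
/-! ### The cyclic form of the map -/

/-- The map `L` for families `X` of functions indexed cyclically in both variables:
`∑_{t<q} (1 + z + ⋯ + z^(t-1)) X_{j-t}` evaluated at `a`, with `z` the shift. The term `t = 0`
is zero and is included for easier re-indexing. -/
def cycMap (q : ℕ) {M : Type*} [AddCommGroup M] (X : ZMod q → ZMod q → M) (j a : ZMod q) : M :=
  ∑ t ∈ Finset.range q, ∑ s ∈ Finset.range t, X (j - t) (a - s)

theorem sum_range_eq_sum_zmod (q : ℕ) [NeZero q] {M : Type*} [AddCommGroup M] (f : ZMod q → M) :
    ∑ s ∈ Finset.range q, f (s : ZMod q) = ∑ b, f b := by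
  refine Finset.sum_bij (fun s _ => (s : ZMod q)) (fun _ _ => Finset.mem_univ _) ?_ ?_
    (fun _ _ => rfl)
  · intro s hs t ht h
    rw [Finset.mem_range] at hs ht
    have := congrArg ZMod.val h
    simpa [ZMod.val_natCast, Nat.mod_eq_of_lt hs, Nat.mod_eq_of_lt ht] using this
  · intro b _
    exact ⟨b.val, Finset.mem_range.2 (ZMod.val_lt b), by simp⟩

theorem cycMap_succ_sub (q : ℕ) [NeZero q] {M : Type*} [AddCommGroup M]
    (X : ZMod q → ZMod q → M) (hX : ∀ i, ∑ b, X i b = 0) (j a : ZMod q) :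
    cycMap q X (j + 1) a - cycMap q X j a = ∑ t ∈ Finset.range q, X (j - t) (a - t) := by
  -- The boundary term `t = q` vanishes because a full period of a row sums to zero.
  have hfull : ∀ i, ∑ s ∈ Finset.range q, X i (a - s) = 0 := by
    intro i
    rw [sum_range_eq_sum_zmod q (fun b => X i (a - b)), ← hX i]
    exact (Equiv.subLeft a).sum_comp (X i)
  have h1 : cycMap q X (j + 1) a =
      ∑ t ∈ Finset.range q, ∑ s ∈ Finset.range (t + 1), X (j - t) (a - s) := by
    have e := Finset.sum_range_succ
      (fun t : ℕ => ∑ s ∈ Finset.range t, X (j + 1 - t) (a - s)) q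
    rw [Finset.sum_range_succ'] at e
    simp only [hfull, add_zero, Finset.range_zero, Finset.sum_empty, Nat.cast_add,
      Nat.cast_one, add_sub_add_right_eq_sub] at e
    exact e.symm
  rw [h1, cycMap, ← Finset.sum_sub_distrib]
  refine Finset.sum_congr rfl fun t _ => ?_
  rw [Finset.sum_range_succ, add_sub_cancel_left]

theorem cycMap_recurrence (q : ℕ) [NeZero q] {M : Type*} [AddCommGroup M]
    (X : ZMod q → ZMod q → M) (hX : ∀ i, ∑ b, X i b = 0) (j a : ZMod q) :
    cycMap q X (j + 1 + 1) (a + 1) =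
      - cycMap q X j a + cycMap q X (j + 1) a + cycMap q X (j + 1) (a + 1) := by
  have h1 := cycMap_succ_sub q X hX j a
  have h2 := cycMap_succ_sub q X hX (j + 1) (a + 1)
  rw [sum_range_eq_sum_zmod q (fun t => X (j - t) (a - t))] at h1
  rw [sum_range_eq_sum_zmod q (fun t => X (j + 1 - t) (a + 1 - t))] at h2
  have h3 : ∑ t, X (j + 1 - t) (a + 1 - t) = ∑ t, X (j - t) (a - t) := by
    rw [← Equiv.sum_comp (Equiv.addRight (1 : ZMod q)) (fun t => X (j + 1 - t) (a + 1 - t))]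
    simp
  rw [h3, ← h1] at h2
  rw [sub_eq_iff_eq_add.1 h2]
  abel

theorem sum_cycMap (q : ℕ) [NeZero q] {M : Type*} [AddCommGroup M]
    (X : ZMod q → ZMod q → M) (hX : ∀ i, ∑ b, X i b = 0) (j : ZMod q) :
    ∑ a, cycMap q X j a = 0 := by
  unfold cycMap
  rw [Finset.sum_comm]
  refine Finset.sum_eq_zero fun t _ => ?_
  rw [Finset.sum_comm]
  refine Finset.sum_eq_zero fun s _ => ?_
  rw [← hX (j - t)]
  exact (Equiv.subRight (s : ZMod q)).sum_comp (X (j - t))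

/-! ### Comparison with `Lmap` -/

theorem extTuple_mod (q : ℕ) {N : ℕ} (x : Fin (q - 1) → ZMod N) (b : ℕ) :
    extTuple q x (b % q) = extTuple q x b := by
  simp [extTuple]

theorem extTuple_zero (q : ℕ) {N : ℕ} (x : Fin (q - 1) → ZMod N) :
    extTuple q x 0 = -∑ a, x a := by
  simp [extTuple]

theorem extTuple_succ (q : ℕ) {N : ℕ} (x : Fin (q - 1) → ZMod N) (a : Fin (q - 1)) :
    extTuple q x ((a : ℕ) + 1) = x a := by
  have h := a.isLt
  have : ((a : ℕ) + 1) % q = a + 1 := Nat.mod_eq_of_lt (by omega)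
  simp [extTuple, this]

/-- A sum over `ZMod q`, split into the residue `0` and the residues `1, …, q - 1`. -/
theorem sum_zmod_eq (q : ℕ) [NeZero q] {M : Type*} [AddCommGroup M] (f : ZMod q → M) :
    ∑ b, f b = ∑ a : Fin (q - 1), f ((a : ℕ) + 1) + f 0 := by
  obtain ⟨p, rfl⟩ : ∃ p, q = p + 1 := ⟨q - 1, by have := NeZero.pos q; omega⟩
  rw [← sum_range_eq_sum_zmod, Finset.sum_range_succ']
  simp [Finset.sum_range]

/-- The family `x`, with each tuple extended by its entry of index zero, indexed by residues
modulo `q`. -/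
def cycExt (q : ℕ) [NeZero q] {N : ℕ} (x : Fin q → Fin (q - 1) → ZMod N) (i b : ZMod q) :
    ZMod N :=
  extTuple q (x ⟨i.val, ZMod.val_lt i⟩) b.val

theorem sum_cycExt (q : ℕ) [NeZero q] {N : ℕ} (x : Fin q → Fin (q - 1) → ZMod N) (i : ZMod q) :
    ∑ b, cycExt q x i b = 0 := by
  rw [sum_zmod_eq]
  have h : ∀ a : Fin (q - 1), cycExt q x i ((a : ℕ) + 1) = x ⟨i.val, ZMod.val_lt i⟩ a := by
    intro a
    rw [cycExt, ← Nat.cast_add_one, ZMod.val_natCast, extTuple_mod, extTuple_succ]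
  simp only [h]
  rw [cycExt, ZMod.val_zero, extTuple_zero, add_neg_cancel]

theorem Lmap_eq_cycMap (q N : ℕ) [NeZero q] (x : Fin q → Fin (q - 1) → ZMod N)
    (j : Fin q) (a : Fin (q - 1)) :
    Lmap q N x j a = cycMap q (cycExt q x) (j : ℕ) ((a : ℕ) + 1) := by
  have hq := NeZero.pos q
  have hr : Finset.range q = insert 0 (Finset.Icc 1 (q - 1)) := by
    ext t; simp only [Finset.mem_range, Finset.mem_insert, Finset.mem_Icc]; omega
  rw [Lmap, cycMap, hr, Finset.sum_insert (by simp)]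
  simp only [Finset.range_zero, Finset.sum_empty, zero_add]
  refine Finset.sum_congr rfl fun t ht => Finset.sum_congr rfl fun s hs => ?_
  rw [Finset.mem_Icc] at ht
  rw [Finset.mem_range] at hs
  have e1 : ((j : ℕ) : ZMod q) - t = (((j : ℕ) + q - t : ℕ) : ZMod q) := by
    rw [Nat.cast_sub (by omega)]; simp
  have e2 : (((a : ℕ) : ZMod q) + 1) - s = (((a : ℕ) + 1 + q - s : ℕ) : ZMod q) := by
    rw [Nat.cast_sub (by omega)]; simp
  simp only [cycExt, e1, e2, ZMod.val_natCast, extTuple_mod]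

theorem feasible_Lmap (q N : ℕ) (x : Fin q → Fin (q - 1) → ZMod N) :
    Feasible q (Lmap q N x) := by
  intro j hj
  have : NeZero q := ⟨by omega⟩
  have hX := sum_cycExt q x
  have hrec := cycMap_recurrence q (cycExt q x) hX (j : ZMod q)
  constructor
  · -- The entries of index zero are recovered from the fact that each row of `cycMap` sums to 0.
    have hz : ∀ k : Fin q, cycMap q (cycExt q x) ((k : ℕ) : ZMod q) 0 =
        -∑ a, Lmap q N x k a := by
      intro k
      have := sum_cycMap q _ hX ((k : ℕ) : ZMod q)
      rw [sum_zmod_eq] at this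
      simp only [Lmap_eq_cycMap]
      exact eq_neg_of_add_eq_zero_right this
    have hs : ∀ f : Fin (q - 1) → ZMod N,
        ∑ a ∈ Finset.univ.filter (fun a : Fin (q - 1) => 1 ≤ (a : ℕ)), f a =
          ∑ a, f a - f ⟨0, by omega⟩ := by
      intro f
      rw [← Finset.sum_erase_eq_sub (Finset.mem_univ _)]
      refine Finset.sum_congr ?_ fun _ _ => rfl
      ext a
      simp only [Finset.mem_filter, Finset.mem_univ, true_and, Finset.mem_erase, and_true,
        ne_eq, Fin.ext_iff]
      omega
    have h0 := hz ⟨j, by omega⟩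
    have h1 := hz ⟨j + 1, by omega⟩
    have h := hrec 0
    have e2 := Lmap_eq_cycMap q N x ⟨j + 2, hj⟩ ⟨0, by omega⟩
    have e1 := Lmap_eq_cycMap q N x ⟨j + 1, by omega⟩ ⟨0, by omega⟩
    rw [hs]
    simp only [Nat.cast_add, Nat.cast_one, Nat.cast_zero, Nat.cast_ofNat] at h0 h1 e1 e2
    rw [show (j : ZMod q) + 1 + 1 = j + 2 by ring, ← e2, ← e1, h0, h1] at h
    rw [h]
    abel
  · intro a ha
    have h := hrec ((a : ZMod q) + 1)
    simp only [Lmap_eq_cycMap, Nat.cast_add, Nat.cast_one, Nat.cast_ofNat]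
    rw [← h, show (j : ZMod q) + 1 + 1 = j + 2 by ring]

theorem Feasible.ext {q : ℕ} {M : Type*} [AddCommGroup M] {v w : Fin q → Fin (q - 1) → M}
    (hq : 2 ≤ q) (hv : Feasible q v) (hw : Feasible q w)
    (h0 : v ⟨0, by omega⟩ = w ⟨0, by omega⟩) (h1 : v ⟨1, by omega⟩ = w ⟨1, by omega⟩) :
    v = w := by
  have key : ∀ j (hj : j + 1 < q), v ⟨j, by omega⟩ = w ⟨j, by omega⟩ ∧
      v ⟨j + 1, hj⟩ = w ⟨j + 1, hj⟩ := by
    intro j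
    induction j with
    | zero => exact fun _ => ⟨h0, h1⟩
    | succ j ih =>
      intro hj
      obtain ⟨ha, hb⟩ := ih (by omega)
      refine ⟨hb, ?_⟩
      funext ⟨a, hlt⟩
      obtain ⟨v0, vs⟩ := hv j hj
      obtain ⟨w0, ws⟩ := hw j hj
      cases a with
      | zero => exact v0.trans (by rw [ha, hb]; exact w0.symm)
      | succ a => exact (vs a hlt).trans (by rw [ha, hb]; exact (ws a hlt).symm)
  funext ⟨j, hj⟩
  cases j with
  | zero => exact h0
  | succ j => exact (key j hj).2

/-! ### Solving for components -/

/-- The component of index `i + 1` of `L x` is `x i` plus terms that involve neither `x i` nor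
`x (i + 1)` (indices modulo `q`). -/
theorem Lmap_sub_eq {q N : ℕ} (hq : 2 ≤ q) (i j : Fin q) (hij : (j : ℕ) = (i + 1) % q)
    (x y : Fin q → Fin (q - 1) → ZMod N) (hxy : ∀ k, k ≠ i → k ≠ j → x k = y k) :
    Lmap q N x j - x i = Lmap q N y j - y i := by
  have hi := i.isLt
  have hcase : ((i : ℕ) + 1 < q ∧ (j : ℕ) = i + 1) ∨ ((i : ℕ) + 1 = q ∧ (j : ℕ) = 0) := by
    rcases Nat.lt_or_ge ((i : ℕ) + 1) q with h | h
    · exact Or.inl ⟨h, by rw [hij, Nat.mod_eq_of_lt h]⟩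
    · have h' : (i : ℕ) + 1 = q := by omega
      exact Or.inr ⟨h', by rw [hij, h', Nat.mod_self]⟩
  have hmod : ∀ t, 1 ≤ t → t ≤ q - 1 →
      (((j : ℕ) + q - t) % q = j + q - t ∧ (j : ℕ) < t) ∨
      (((j : ℕ) + q - t) % q = j - t ∧ t ≤ j) := by
    intro t h1 h2
    rcases Nat.lt_or_ge (j : ℕ) t with h | h
    · exact Or.inl ⟨Nat.mod_eq_of_lt (by omega), h⟩
    · refine Or.inr ⟨?_, h⟩
      have hjq := j.isLt
      rw [show (j : ℕ) + q - t = j - t + q by omega, Nat.add_mod_right,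
        Nat.mod_eq_of_lt (by omega)]
  have hsplit : ∀ (u : Fin q → Fin (q - 1) → ZMod N) (a : Fin (q - 1)),
      Lmap q N u j a - u i a = ∑ t ∈ (Finset.Icc 1 (q - 1)).erase 1, ∑ s ∈ Finset.range t,
        extTuple q (u ⟨((j : ℕ) + q - t) % q, Nat.mod_lt _ j.pos⟩) ((a : ℕ) + 1 + q - s) := by
    intro u a
    have h1 : (1 : ℕ) ∈ Finset.Icc 1 (q - 1) := Finset.mem_Icc.2 ⟨le_rfl, by omega⟩
    rw [Lmap, ← Finset.add_sum_erase _ _ h1]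
    have hrow : (⟨((j : ℕ) + q - 1) % q, Nat.mod_lt _ j.pos⟩ : Fin q) = i := by
      apply Fin.ext
      have := hmod 1 le_rfl (by omega)
      simp only
      omega
    rw [Finset.sum_range_one, hrow, Nat.sub_zero, ← extTuple_mod, Nat.add_mod_right,
      extTuple_mod, extTuple_succ, add_sub_cancel_left]
  funext a
  rw [Pi.sub_apply, Pi.sub_apply, hsplit, hsplit]
  refine Finset.sum_congr rfl fun t ht => ?_
  rw [Finset.mem_erase, Finset.mem_Icc] at ht
  have := hmod t ht.2.1 ht.2.2
  rw [hxy _ (fun h => ?_) (fun h => ?_)]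
  · have := congrArg Fin.val h
    simp only at this
    omega
  · have := congrArg Fin.val h
    simp only at this
    omega

/-- A solution of `L x = w` is determined by its components other than the first and the last,
and these are arbitrary. -/
theorem bijective_restrict {q N : ℕ} (hq : 3 ≤ q) (w : Fin q → Fin (q - 1) → ZMod N)
    (hw : Feasible q w) :
    Function.Bijective
      (fun (x : {x : Fin q → Fin (q - 1) → ZMod N // Lmap q N x = w}) (k : Fin (q - 2)) =>
        x.1 ⟨(k : ℕ) + 1, by omega⟩) := by
  have hlast : ((⟨0, by omega⟩ : Fin q) : ℕ) = (((⟨q - 1, by omega⟩ : Fin q) : ℕ) + 1) % q := by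
    simp [Nat.sub_add_cancel (show 1 ≤ q by omega)]
  have hzero : ((⟨1, by omega⟩ : Fin q) : ℕ) = (((⟨0, by omega⟩ : Fin q) : ℕ) + 1) % q := by
    simp [Nat.mod_eq_of_lt (show 1 < q by omega)]
  constructor
  · rintro ⟨x, hx⟩ ⟨y, hy⟩ h
    have hmid : ∀ k : Fin q, k ≠ ⟨q - 1, by omega⟩ → k ≠ ⟨0, by omega⟩ → x k = y k := by
      intro k hk1 hk2
      rw [ne_eq, Fin.ext_iff] at hk1 hk2
      simp only at hk1 hk2
      have hk := k.isLt
      have := congrFun h ⟨k - 1, by omega⟩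
      simp only at this
      convert this using 2 <;> (apply Fin.ext; simp only; omega)
    have hl : x ⟨q - 1, by omega⟩ = y ⟨q - 1, by omega⟩ := by
      have := Lmap_sub_eq (by omega) _ _ hlast x y hmid
      rwa [hx, hy, sub_right_inj] at this
    have h0 : x ⟨0, by omega⟩ = y ⟨0, by omega⟩ := by
      have := Lmap_sub_eq (by omega) _ _ hzero x y (fun k hk _ => by
        by_cases hk' : k = ⟨q - 1, by omega⟩
        · rw [hk', hl]
        · exact hmid k hk' hk)
      rwa [hx, hy, sub_right_inj] at this
    apply Subtype.ext
    funext k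
    by_cases hk1 : k = ⟨q - 1, by omega⟩
    · rw [hk1]; exact hl
    by_cases hk2 : k = ⟨0, by omega⟩
    · rw [hk2]; exact h0
    exact hmid k hk1 hk2
  · intro u
    set l : Fin q := ⟨q - 1, by omega⟩ with hldef
    set z : Fin q := ⟨0, by omega⟩ with hzdef
    have hlz : l ≠ z := by
      rw [ne_eq, Fin.ext_iff]; simp only [hldef, hzdef]; omega
    -- Extend `u` by zero, then correct the last component, then the first one.
    let x₀ : Fin q → Fin (q - 1) → ZMod N := fun k =>
      if h : 1 ≤ (k : ℕ) ∧ (k : ℕ) < q - 1 then u ⟨k - 1, by omega⟩ else 0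
    let x₁ := Function.update x₀ l (w z - (Lmap q N x₀ z - x₀ l))
    let x₂ := Function.update x₁ z (w ⟨1, by omega⟩ - (Lmap q N x₁ ⟨1, by omega⟩ - x₁ z))
    have hx₂z : x₂ z = w ⟨1, by omega⟩ - (Lmap q N x₁ ⟨1, by omega⟩ - x₁ z) :=
      Function.update_self _ _ _
    have hx₂ : ∀ k, k ≠ z → x₂ k = x₁ k := fun k hk => Function.update_of_ne hk _ _
    have hx₁ : ∀ k, k ≠ l → x₁ k = x₀ k := fun k hk => Function.update_of_ne hk _ _
    have hx₂l : x₂ l = w z - (Lmap q N x₀ z - x₀ l) :=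
      (hx₂ l hlz).trans (Function.update_self _ _ _)
    have e0 : Lmap q N x₂ z = w z := by
      have := Lmap_sub_eq (by omega) l z hlast x₂ x₀
        (fun k hk1 hk2 => (hx₂ k hk2).trans (hx₁ k hk1))
      rw [← this] at hx₂l
      rw [eq_sub_iff_add_eq, add_sub_cancel] at hx₂l
      exact hx₂l
    have e1 : Lmap q N x₂ ⟨1, by omega⟩ = w ⟨1, by omega⟩ := by
      have := Lmap_sub_eq (by omega) z ⟨1, by omega⟩ hzero x₂ x₁ (fun k hk _ => hx₂ k hk)
      rw [← this] at hx₂z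
      rw [eq_sub_iff_add_eq, add_sub_cancel] at hx₂z
      exact hx₂z
    refine ⟨⟨x₂, (feasible_Lmap q N x₂).ext (by omega) hw e0 e1⟩, ?_⟩
    funext k
    have hk := k.isLt
    have hkz : (⟨(k : ℕ) + 1, by omega⟩ : Fin q) ≠ z := by
      rw [ne_eq, Fin.ext_iff]; simp only [hzdef]; omega
    have hkl : (⟨(k : ℕ) + 1, by omega⟩ : Fin q) ≠ l := by
      rw [ne_eq, Fin.ext_iff]; simp only [hldef]; omega
    change x₂ ⟨(k : ℕ) + 1, by omega⟩ = u k
    rw [hx₂ _ hkz, hx₁ _ hkl]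
    have hc : 1 ≤ (k : ℕ) + 1 ∧ (k : ℕ) + 1 < q - 1 := by omega
    simp [x₀, hc]

theorem stmt15 (q N : ℕ) (hq : 3 ≤ q) (hN : 1 ≤ N) :
    (∀ w : Fin q → Fin (q - 1) → ZMod N, Feasible q w →
      Nat.card {x : Fin q → Fin (q - 1) → ZMod N // Lmap q N x = w} =
        N ^ ((q - 1) * (q - 2))) ∧
    (∀ w : Fin q → Fin (q - 1) → ZMod N, Feasible q w →
      ∀ x y : Fin q → Fin (q - 1) → ZMod N,
        Lmap q N x = w → Lmap q N y = w → x ≠ y →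
        ∃ j₁ j₂ : Fin q, j₁ ≠ j₂ ∧ x j₁ ≠ y j₁ ∧ x j₂ ≠ y j₂) := by
  refine ⟨fun w hw => ?_, fun w _ x y hx hy hne => ?_⟩
  · rw [Nat.card_eq_of_bijective _ (bijective_restrict hq w hw)]
    simp [Nat.card_fun, pow_mul]
  · obtain ⟨i, hi⟩ := Function.ne_iff.1 hne
    by_contra! hcon
    -- If only component `i` differs, the component of index `i + 1` of `L` detects it.
    have := Lmap_sub_eq (by omega) i ⟨((i : ℕ) + 1) % q, Nat.mod_lt _ i.pos⟩ rfl x y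
      (fun k hk _ => hcon i k hk.symm hi)
    rw [hx, hy, sub_right_inj] at this
    exact hi this
end

section
/- Let q ≥ 2 and n ≥ q, and let x ∈ (ZMod q)ⁿ satisfy w_a(x) ≥ 1 for every a ∈ ZMod q. Then there exists d ∈ (ZMod q)ⁿ with d ≠ 0 such that for every j ∈ {0, 1, …, q−1} and every a ∈ ZMod q one has w_a(x + j·d) = w_a(x). In particular, every symmetric set S ⊆ (ZMod q)ⁿ containing x contains the full arithmetic progression x, x+d, …, x+(q−1)d with nonzero difference d. -/
/-- A set `S ⊆ (ZMod q)ⁿ` is symmetric if membership depends only on the weight tuple. -/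
def IsSymmetric {q n : ℕ} (S : Finset (Fin n → ZMod q)) : Prop :=
  ∀ x y : Fin n → ZMod q, (∀ a : ZMod q, wt x a = wt y a) → (x ∈ S ↔ y ∈ S)

theorem wt_comp_of_injective {q n : ℕ} (x : Fin n → ZMod q) (σ : Fin n → Fin n)
    (hσ : Function.Injective σ) (a : ZMod q) : wt (fun i => x (σ i)) a = wt x a := by
  unfold wt
  refine Finset.card_bij (fun i _ => σ i) (by simp) (fun i _ k _ h => hσ h) fun k hk => ?_
  obtain ⟨i, rfl⟩ := Finite.surjective_of_injective hσ k
  exact ⟨i, by simpa using hk, rfl⟩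

theorem stmt17 (q n : ℕ) (hq : 2 ≤ q) (hn : q ≤ n)
    (x : Fin n → ZMod q) (hx : ∀ a : ZMod q, 1 ≤ wt x a) :
    ∃ d : Fin n → ZMod q, d ≠ 0 ∧
      (∀ j : ℕ, j < q → ∀ a : ZMod q,
        wt (fun i => x i + (j : ZMod q) * d i) a = wt x a) ∧
      ∀ S : Finset (Fin n → ZMod q), IsSymmetric S → x ∈ S →
        ∀ j : ℕ, j < q → (fun i => x i + (j : ZMod q) * d i) ∈ S := by
  have hex : ∀ a : ZMod q, ∃ i, x i = a := fun a => by
    obtain ⟨i, hi⟩ := Finset.card_pos.mp (hx a)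
    exact ⟨i, by simpa using hi⟩
  choose r hr using hex
  have : Fact (1 < q) := ⟨hq⟩
  have hwt : ∀ (j : ℕ) (a : ZMod q),
      wt (fun i => x i + (j : ZMod q) * (if i = r (x i) then 1 else 0)) a = wt x a := by
    intro j a
    have hσ : Function.Injective
        (fun i => if i = r (x i) then r (x i + (j : ZMod q)) else i) := by
      intro i k h
      dsimp only at h
      split_ifs at h with hi hk hk
      · have h' := congrArg x h
        rw [hr, hr] at h'
        rw [hi, hk, add_right_cancel h']
      · exact absurd (by rw [← h, hr]) hk
      · exact absurd (by rw [h, hr]) hi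
      · exact h
    rw [← wt_comp_of_injective x _ hσ a]
    congr 1
    funext i
    split_ifs <;> simp [hr]
  refine ⟨fun i => if i = r (x i) then 1 else 0, fun h => ?_, fun j _ => hwt j,
    fun S hS hxS j _ => (hS _ x (hwt j)).mpr hxS⟩
  have h0 := congrFun h (r 0)
  simp [hr] at h0
end
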